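/- arXiv:1804.07630 — 2 statements merged into one kernel-verified Lean document; each statement's English description precedes it below -/
import Mathlib

section
/- Let G be a residually finite group having a solvable subgroup of finite index, let Σ be a finite set with a distinguished element 0, and let Σ^G carry the product topology and the shift action (g·x)_h = x_{g⁻¹h}. Let f : Σ^G → Σ^G be a cellular automaton, i.e. a continuous map satisfying f(g·x) = g·f(x) for all g ∈ G and x ∈ Σ^G. If fⁿ(x) → 0^G in the product topology for every x ∈ Σ^G (where 0^G is the configuration that is constantly 0), then there exists n ∈ ℕ such that fⁿ(x) = 0^G for all x ∈ Σ^G. -/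
/-- A group is residually finite if every nontrivial element survives in some finite
quotient. -/
def ResiduallyFinite (H : Type) [Group H] : Prop :=
  ∀ g : H, g ≠ 1 → ∃ (Q : Type) (_ : Group Q) (φ : H →* Q), Finite Q ∧ φ g ≠ 1

namespace NilCA
set_option linter.unusedSectionVars false
set_option linter.style.haveILetI false
open Set

/-- `x` takes the value `a₀` outside `U`. -/
def SuppIn {Ω A : Type} (a₀ : A) (x : Ω → A) (U : Set Ω) : Prop := ∀ ω, ω ∉ U → x ω = a₀

/-- The saturation of `F` under the group `Γ`. -/
def sat (Γ : Type) [Group Γ] {Ω : Type} [MulAction Γ Ω] (F : Set Ω) : Set Ω :=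
  {ω | ∃ γ : Γ, ∃ s ∈ F, γ • s = ω}

/-- An asymptotically nilpotent cellular automaton over a free action. -/
structure Sys (Γ : Type) [Group Γ] {Ω A : Type} [MulAction Γ Ω] [TopologicalSpace A]
    (a₀ : A) (f : (Ω → A) → (Ω → A)) : Prop where
  free : ∀ (γ : Γ) (ω : Ω), γ • ω = ω → γ = 1
  cont : Continuous f
  equi : ∀ (γ : Γ) (x : Ω → A), f (fun ω => x (γ • ω)) = fun ω => f x (γ • ω)
  an : ∀ (x : Ω → A) (ω : Ω), ∃ N, ∀ n ≥ N, f^[n] x ω = a₀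

/-- Confinement of orbits. -/
def Conf (Γ : Type) [Group Γ] {Ω A : Type} [MulAction Γ Ω] (a₀ : A)
    (f : (Ω → A) → (Ω → A)) (F F' : Set Ω) : Prop :=
  ∀ x, SuppIn a₀ x (sat Γ F) → ∀ n, SuppIn a₀ (f^[n] x) (sat Γ F')

section basic
variable {Γ : Type} [Group Γ] {Ω A : Type} [MulAction Γ Ω]

lemma SuppIn.mono {a₀ : A} {x : Ω → A} {U V : Set Ω} (h : SuppIn a₀ x U) (hUV : U ⊆ V) :
    SuppIn a₀ x V := fun ω hω => h ω (fun h' => hω (hUV h'))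

lemma sat_mono {F F' : Set Ω} (h : F ⊆ F') : sat Γ F ⊆ sat Γ F' := by
  rintro ω ⟨γ, s, hs, rfl⟩
  exact ⟨γ, s, h hs, rfl⟩

lemma subset_sat (F : Set Ω) : F ⊆ sat Γ F := fun ω hω => ⟨1, ω, hω, one_smul _ _⟩

lemma smul_mem_sat {F : Set Ω} {ω : Ω} (γ : Γ) : γ • ω ∈ sat Γ F ↔ ω ∈ sat Γ F := by
  constructor
  · rintro ⟨δ, s, hs, h⟩
    exact ⟨γ⁻¹ * δ, s, hs, by rw [mul_smul, h, inv_smul_smul]⟩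
  · rintro ⟨δ, s, hs, rfl⟩
    exact ⟨γ * δ, s, hs, by rw [mul_smul]⟩

lemma sat_subgroup_le (L : Subgroup Γ) (F : Set Ω) : sat L F ⊆ sat Γ F := by
  rintro ω ⟨γ, s, hs, rfl⟩
  exact ⟨γ, s, hs, rfl⟩

lemma sat_sub_of_sub {F F' : Set Ω} (h : F ⊆ sat Γ F') : sat Γ F ⊆ sat Γ F' := by
  rintro ω ⟨γ, s, hs, rfl⟩
  exact (smul_mem_sat γ).2 (h hs)

/-- Transporter sets are finite for free actions. -/
lemma transporter_finite (hfree : ∀ (γ : Γ) (ω : Ω), γ • ω = ω → γ = 1)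
    {S T : Set Ω} (hS : S.Finite) (hT : T.Finite) : {γ : Γ | ∃ s ∈ S, γ • s ∈ T}.Finite := by
  have hsub : {γ : Γ | ∃ s ∈ S, γ • s ∈ T} ⊆ ⋃ s ∈ S, ⋃ t ∈ T, {γ : Γ | γ • s = t} := by
    rintro γ ⟨s, hs, ht⟩
    simp only [mem_iUnion]
    exact ⟨s, hs, _, ht, rfl⟩
  refine (hS.biUnion fun s _ => hT.biUnion fun t _ => ?_).subset hsub
  apply Set.Subsingleton.finite
  intro γ hγ δ hδ
  have : (δ⁻¹ * γ) • s = s := by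
    rw [mul_smul, show γ • s = t from hγ, ← show δ • s = t from hδ, inv_smul_smul]
  have h1 := hfree _ _ this
  exact (inv_mul_eq_one.1 h1).symm

end basic

section topo
variable {Ω A : Type} [Finite A] [TopologicalSpace A] [DiscreteTopology A]

/-- Continuous maps to a finite discrete set depend on finitely many coordinates. -/
lemma exists_loc {B : Type} [TopologicalSpace B] [DiscreteTopology B]
    (g : (Ω → A) → B) (hg : Continuous g) :
    ∃ E : Set Ω, E.Finite ∧ ∀ x y : Ω → A, (∀ e ∈ E, x e = y e) → g x = g y := by
  classical
  have h1 : ∀ x : Ω → A, ∃ E : Finset Ω, ∀ y, (∀ e ∈ E, y e = x e) → g y = g x := by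
    intro x
    have ho : IsOpen (g ⁻¹' {g x}) := (isOpen_discrete _).preimage hg
    obtain ⟨I, u, hu, hsub⟩ := isOpen_pi_iff.1 ho x rfl
    refine ⟨I, fun y hy => hsub ?_⟩
    intro e he
    rw [hy e he]
    exact (hu e he).2
  choose E hE using h1
  have ho : ∀ x : Ω → A, IsOpen {y : Ω → A | ∀ e ∈ E x, y e = x e} := by
    intro x
    have : {y : Ω → A | ∀ e ∈ E x, y e = x e} = (E x : Set Ω).pi (fun e => {x e}) := by
      ext y; simp [Set.mem_pi]
    rw [this]
    exact isOpen_set_pi (E x).finite_toSet (fun e _ => isOpen_discrete _)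
  obtain ⟨t, ht⟩ := isCompact_univ.elim_finite_subcover _ ho
    (fun x _ => mem_iUnion.2 ⟨x, fun e _ => rfl⟩)
  refine ⟨(t.biUnion E : Finset Ω), Finset.finite_toSet _, fun x y hxy => ?_⟩
  obtain ⟨z, hz⟩ := mem_iUnion.1 (ht (mem_univ x))
  obtain ⟨hzt, hz⟩ := mem_iUnion.1 hz
  rw [hE z x hz, hE z y]
  intro e he
  rw [← hz e he, hxy]
  simp only [Finset.coe_biUnion, mem_iUnion]
  exact ⟨z, hzt, he⟩

/-- Baire category argument. -/
lemma baire (a₀ : A) (f : (Ω → A) → (Ω → A)) (hf : Continuous f)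
    (han : ∀ (x : Ω → A) (ω : Ω), ∃ N, ∀ n ≥ N, f^[n] x ω = a₀)
    (M : Set (Ω → A)) (hM : M.Nonempty) (C : Set Ω) (hC : C.Finite) :
    ∃ x₀ ∈ M, ∃ D : Set Ω, D.Finite ∧ ∃ n₀ : ℕ, ∀ y ∈ M, (∀ d ∈ D, y d = x₀ d) →
      ∀ n ≥ n₀, ∀ c ∈ C, f^[n] y c = a₀ := by
  classical
  let X := closure M
  have : CompactSpace X := isCompact_iff_compactSpace.1 isClosed_closure.isCompact
  have : Nonempty X := hM.closure.to_subtype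
  let V : ℕ → Set X := fun n => {x | ∀ m ≥ n, ∀ c ∈ C, f^[m] x.1 c = a₀}
  have hVc : ∀ n, IsClosed (V n) := by
    intro n
    have : V n = ⋂ m, ⋂ (_ : m ≥ n), ⋂ c, ⋂ (_ : c ∈ C), {x : X | f^[m] x.1 c = a₀} := by
      ext x; simp [V]
    rw [this]
    refine isClosed_iInter fun m => isClosed_iInter fun _ => isClosed_iInter fun c =>
      isClosed_iInter fun _ => ?_
    have hcont : Continuous fun x : X => f^[m] x.1 c :=
      (continuous_apply c).comp ((hf.iterate m).comp continuous_subtype_val)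
    exact isClosed_eq hcont continuous_const
  have hVu : ⋃ n, V n = univ := by
    rw [eq_univ_iff_forall]
    intro x
    choose N hN using han x.1
    obtain ⟨b, hb⟩ := (hC.image N).bddAbove
    refine mem_iUnion.2 ⟨b, fun m hm c hc => hN c m (le_trans (hb (mem_image_of_mem _ hc)) hm)⟩
  obtain ⟨n₀, hn₀⟩ := nonempty_interior_of_iUnion_of_closed hVc hVu
  obtain ⟨z, hz⟩ := hn₀
  obtain ⟨O, hO, hOi⟩ := isOpen_induced_iff.1 (isOpen_interior (s := V n₀))
  have hzO : z.1 ∈ O := by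
    have : z ∈ (Subtype.val ⁻¹' O : Set X) := by rw [hOi]; exact hz
    exact this
  obtain ⟨x₀, hx₀O, hx₀M⟩ := mem_closure_iff.1 z.2 O hO hzO
  obtain ⟨I, u, hu, hsub⟩ := isOpen_pi_iff.1 hO x₀ hx₀O
  refine ⟨x₀, hx₀M, I, I.finite_toSet, n₀, fun y hy hyd => ?_⟩
  have hyO : y ∈ O := by
    apply hsub
    intro e he
    rw [hyd e he]
    exact (hu e he).2
  have hyi : (⟨y, subset_closure hy⟩ : X) ∈ interior (V n₀) := by
    rw [← hOi]; exact hyO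
  exact interior_subset hyi

end topo

section sys
variable {Γ : Type} [Group Γ] {Ω A : Type} [MulAction Γ Ω]
  [Finite A] [TopologicalSpace A] [DiscreteTopology A] {a₀ : A} {f : (Ω → A) → (Ω → A)}

lemma Sys.unif_an (h : Sys Γ a₀ f) (x : Ω → A) {C : Set Ω} (hC : C.Finite) :
    ∃ N, ∀ n ≥ N, ∀ c ∈ C, f^[n] x c = a₀ := by
  choose N hN using h.an x
  obtain ⟨b, hb⟩ := (hC.image N).bddAbove
  exact ⟨b, fun m hm c hc => hN c m (le_trans (hb (mem_image_of_mem _ hc)) hm)⟩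

lemma Sys.zero (h : Sys Γ a₀ f) : f (fun _ => a₀) = fun _ => a₀ := by
  ext ω
  obtain ⟨E, hE, hloc⟩ := exists_loc (fun x => f x ω) ((continuous_apply ω).comp h.cont)
  obtain ⟨N, hN⟩ := h.unif_an (fun _ => a₀) hE
  obtain ⟨N', hN'⟩ := h.an (fun _ => a₀) ω
  have h1 := hloc (fun _ => a₀) (f^[max N N'] (fun _ => a₀))
    (fun e he => (hN _ (le_max_left _ _) e he).symm)
  have h2 := hN' (max N N' + 1) (by omega)
  rw [Function.iterate_succ_apply'] at h2
  exact h1.trans h2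

lemma Sys.iter_zero (h : Sys Γ a₀ f) (n : ℕ) : f^[n] (fun _ => a₀) = fun _ => a₀ :=
  Function.iterate_fixed h.zero n

lemma Sys.iter_equi (h : Sys Γ a₀ f) (n : ℕ) (γ : Γ) (x : Ω → A) :
    f^[n] (fun ω => x (γ • ω)) = fun ω => f^[n] x (γ • ω) := by
  induction n with
  | zero => rfl
  | succ n ih => rw [Function.iterate_succ_apply', ih, h.equi, Function.iterate_succ_apply']

lemma Sys.dead (h : Sys Γ a₀ f) {x : Ω → A} {T n : ℕ} (hT : f^[T] x = fun _ => a₀)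
    (hn : T ≤ n) : f^[n] x = fun _ => a₀ := by
  obtain ⟨k, rfl⟩ := Nat.exists_eq_add_of_le hn
  rw [add_comm, Function.iterate_add_apply, hT, h.iter_zero]

lemma Sys.unif_loc (h : Sys Γ a₀ f) {F : Set Ω} (hF : F.Finite) (n : ℕ) :
    ∃ E : Set Ω, E.Finite ∧ ∀ s ∈ F, ∀ (γ : Γ) (x y : Ω → A),
      (∀ e ∈ E, x (γ • e) = y (γ • e)) → f^[n] x (γ • s) = f^[n] y (γ • s) := by
  have h1 : ∀ s : Ω, ∃ E : Set Ω, E.Finite ∧ ∀ x y : Ω → A, (∀ e ∈ E, x e = y e) →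
      f^[n] x s = f^[n] y s := fun s =>
    exists_loc (fun x => f^[n] x s) ((continuous_apply s).comp (h.cont.iterate n))
  choose E hE hloc using h1
  refine ⟨⋃ s ∈ F, E s, hF.biUnion fun s _ => hE s, fun s hs γ x y hxy => ?_⟩
  have := hloc s (fun ω => x (γ • ω)) (fun ω => y (γ • ω))
    (fun e he => hxy e (mem_biUnion hs he))
  rwa [h.iter_equi, h.iter_equi] at this

lemma Sys.fin_mortal (h : Sys Γ a₀ f) {x : Ω → A} {C : Set Ω} (hC : C.Finite)
    (hx : ∀ n, SuppIn a₀ (f^[n] x) C) : ∃ n, f^[n] x = fun _ => a₀ := by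
  obtain ⟨N, hN⟩ := h.unif_an x hC
  refine ⟨N, ?_⟩
  ext ω
  by_cases hω : ω ∈ C
  · exact hN N le_rfl ω hω
  · exact hx N ω hω

open Classical in
/-- Superposition. -/
noncomputable def glue (a₀ : A) (P y : Ω → A) : Ω → A :=
  fun ω => if y ω = a₀ then P ω else y ω

lemma glue_of_left {P y : Ω → A} {ω : Ω} (hP : P ω = a₀) : glue a₀ P y ω = y ω := by
  unfold glue; split_ifs with hh
  · rw [hP, hh]
  · rfl

lemma glue_of_right {P y : Ω → A} {ω : Ω} (hy : y ω = a₀) : glue a₀ P y ω = P ω := by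
  unfold glue; rw [if_pos hy]

lemma glue_supp {P y : Ω → A} {U : Set Ω} (hP : SuppIn a₀ P U) (hy : SuppIn a₀ y U) :
    SuppIn a₀ (glue a₀ P y) U := fun ω hω => by
  rw [glue_of_left (hP ω hω), hy ω hω]

lemma glue_mortal (h : Sys Γ a₀ f) (L : Subgroup Γ) {F F' : Set Ω} (hF' : F'.Finite)
    (hc : Conf Γ a₀ f F F') {P : Ω → A} (hP : SuppIn a₀ P (sat Γ F)) {Dt : Set Ω}
    (hDt : Dt.Finite) (hPL : SuppIn a₀ P (sat L Dt)) {T : ℕ} (hT : f^[T] P = fun _ => a₀) :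
    ∃ W : Set Ω, W.Finite ∧ ∀ y, SuppIn a₀ y (sat Γ F) → (∀ ω ∈ sat L W, y ω = a₀) →
      f^[T] (glue a₀ P y) = f^[T] y := by
  obtain ⟨E, hE, hloc⟩ := h.unif_loc hF' T
  set Δ : Set Γ := {δ | ∃ e ∈ E, δ • e ∈ Dt} with hΔ
  have hΔf : Δ.Finite := transporter_finite h.free hE hDt
  refine ⟨Set.image2 (fun δ e => δ • e) Δ E, hΔf.image2 _ hE, fun y hy hyW => ?_⟩
  ext ω
  by_cases hω : ω ∈ sat Γ F'
  · obtain ⟨γ, s, hs, rfl⟩ := hω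
    by_cases hex : ∃ e ∈ E, γ • e ∈ sat L Dt
    · obtain ⟨e, he, l, d, hd, hld⟩ := hex
      have hmem : (l : Γ)⁻¹ * γ ∈ Δ := by
        refine ⟨e, he, ?_⟩
        rw [mul_smul, ← hld]
        show (l : Γ)⁻¹ • ((l : Γ) • d) ∈ Dt
        rwa [inv_smul_smul]
      have hy0 : ∀ e' ∈ E, y (γ • e') = a₀ := by
        intro e' he'
        refine hyW _ ⟨l, ((l : Γ)⁻¹ * γ) • e', ⟨_, hmem, e', he', rfl⟩, ?_⟩
        show (l : Γ) • (_ : Ω) = _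
        rw [mul_smul, smul_inv_smul]
      rw [hloc s hs γ (glue a₀ P y) P (fun e' he' => glue_of_right (hy0 e' he')),
        hloc s hs γ y (fun _ => a₀) (fun e' he' => hy0 e' he'), hT, h.iter_zero]
    · push Not at hex
      exact hloc s hs γ _ _ (fun e he => glue_of_left (hPL _ (hex e he)))
  · rw [hc _ (glue_supp hP hy) T ω hω, hc _ hy T ω hω]

/-- A blocking mortal point forces a window of zeros to be blocking. -/
lemma window (h : Sys Γ a₀ f) (L : Subgroup Γ) {F F' Q : Set Ω} (hF' : F'.Finite)
    (hQ : Q.Finite)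
    (hc : Conf Γ a₀ f F F') {P : Ω → A} (hP : SuppIn a₀ P (sat Γ F)) {Dt : Set Ω}
    (hDt : Dt.Finite) (hPL : SuppIn a₀ P (sat L Dt)) {T : ℕ} (hT : f^[T] P = fun _ => a₀)
    (M : Set (Ω → A)) (hM : ∀ y ∈ M, SuppIn a₀ y (sat Γ F))
    (hMg : ∀ y ∈ M, f^[T] (glue a₀ P y) = f^[T] y → glue a₀ P y ∈ M)
    {D : Set Ω} (hD : D.Finite) {n₀ : ℕ}
    (hblock : ∀ z ∈ M, (∀ d ∈ D, z d = P d) → ∀ n ≥ n₀, ∀ c ∈ Q, f^[n] z c = a₀) :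
    ∃ W : Set Ω, W.Finite ∧ ∀ y ∈ M, (∀ ω ∈ sat L W, y ω = a₀) →
      ∀ n, ∀ c ∈ Q, f^[n] y c = a₀ := by
  obtain ⟨W₁, hW₁, hg⟩ := glue_mortal h L hF' hc hP hDt hPL hT
  have h2 : ∀ n, ∃ E : Set Ω, E.Finite ∧ ∀ s ∈ Q, ∀ (γ : Γ) (x y : Ω → A),
      (∀ e ∈ E, x (γ • e) = y (γ • e)) → f^[n] x (γ • s) = f^[n] y (γ • s) :=
    fun n => h.unif_loc hQ n
  choose E hE hloc using h2
  refine ⟨W₁ ∪ D ∪ ⋃ n ∈ Set.Iio (max T n₀), E n, (hW₁.union hD).union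
    ((Set.finite_Iio _).biUnion fun n _ => hE n), fun y hy hyW n c hcQ => ?_⟩
  by_cases hn : n < max T n₀
  · have := hloc n c hcQ 1 y (fun _ => a₀) (fun e he => ?_)
    · rwa [one_smul, h.iter_zero] at this
    · rw [one_smul]
      apply hyW
      apply subset_sat
      exact Or.inr (mem_biUnion hn he)
  · have hn' : T ≤ n ∧ n₀ ≤ n := by
      constructor <;> [exact (le_max_left _ _).trans (not_lt.1 hn);
        exact (le_max_right _ _).trans (not_lt.1 hn)]
    have hgl := hg y (hM y hy) (fun ω hω => hyW ω (sat_mono (fun w hw => Or.inl (Or.inl hw)) hω))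
    have hz := hblock _ (hMg y hy hgl) (fun d hd => glue_of_right
      (hyW d (subset_sat _ (Or.inl (Or.inr hd))))) n hn'.2 c hcQ
    obtain ⟨k, rfl⟩ := Nat.exists_eq_add_of_le hn'.1
    rw [add_comm, Function.iterate_add_apply, hgl, ← Function.iterate_add_apply] at hz
    rwa [add_comm]

/-- From windows to confinement along the normal subgroup `L`. -/
lemma conf_of_window (h : Sys Γ a₀ f) (L : Subgroup Γ) [L.Normal] {F F' : Set Ω}
    (hF' : F'.Finite) (hc : Conf Γ a₀ f F F') {W : Set Ω} (hW : W.Finite)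
    (hwin : ∀ y, SuppIn a₀ y (sat Γ F) → (∀ ω ∈ sat L W, y ω = a₀) →
      ∀ n, ∀ c ∈ F', f^[n] y c = a₀) {K : Set Ω} (hK : K.Finite) (hKF : K ⊆ sat Γ F) :
    ∃ K' : Set Ω, K'.Finite ∧ Conf L a₀ f K K' := by
  set Δ : Set Γ := {δ | ∃ w ∈ W, δ • w ∈ K} with hΔ
  have hΔf : Δ.Finite := transporter_finite h.free hW hK
  refine ⟨Set.image2 (fun δ e => δ • e) Δ F', hΔf.image2 _ hF', fun y hy n ω hω => ?_⟩
  have hyF : SuppIn a₀ y (sat Γ F) :=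
    hy.mono ((sat_subgroup_le L K).trans (sat_sub_of_sub hKF))
  by_cases hωF : ω ∈ sat Γ F'
  · obtain ⟨γ, c, hcF, rfl⟩ := hωF
    have h1 := hwin (fun ω => y (γ • ω)) (fun ω hω => hyF _ (by rwa [smul_mem_sat])) ?_ n c hcF
    · rwa [h.iter_equi] at h1
    · rintro _ ⟨l, w, hw, rfl⟩
      apply hy
      rintro ⟨l2, e, he, hle⟩
      apply hω
      have hconj : γ * (l : Γ) * γ⁻¹ ∈ L := ‹L.Normal›.conj_mem _ l.2 γ
      have hle' : (l2 : Γ) • e = γ • ((l : Γ) • w) := hle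
      set l3 : Γ := (γ * (l : Γ) * γ⁻¹)⁻¹ * l2 with hl3
      have hl3m : l3 ∈ L := L.mul_mem (L.inv_mem hconj) l2.2
      have hgw : γ • w = l3 • e := by
        rw [hl3, mul_smul, hle', smul_smul, smul_smul]
        congr 1
        group
      refine ⟨⟨l3, hl3m⟩, (l3⁻¹ * γ) • c, ⟨l3⁻¹ * γ, ⟨w, hw, ?_⟩, c, hcF, rfl⟩, ?_⟩
      · rw [mul_smul, hgw, inv_smul_smul]; exact he
      · show l3 • (_ : Ω) = _
        rw [smul_smul, mul_inv_cancel_left]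
  · exact hc y hyF n ω hωF

lemma sat_bot (K : Set Ω) : sat (⊥ : Subgroup Γ) K = K := by
  ext ω
  constructor
  · rintro ⟨⟨γ, hγ⟩, s, hs, rfl⟩
    obtain rfl := Subgroup.mem_bot.1 hγ
    have : (⟨1, hγ⟩ : (⊥ : Subgroup Γ)) • s = s := one_smul Γ s
    rwa [this]
  · exact fun h => subset_sat _ h

/-- Mortal points visiting a fixed finite set from arbitrarily far away do not exist. -/
lemma no_visits (h : Sys Γ a₀ f) {F F' Q : Set Ω} (hF' : F'.Finite) (hQ : Q.Finite)
    (hc : Conf Γ a₀ f F F')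
    (hv : ∀ B : Set Ω, B.Finite → ∃ y : Ω → A, SuppIn a₀ y (sat Γ F) ∧
      (∃ S : Set Ω, S.Finite ∧ SuppIn a₀ y S) ∧ (∀ b ∈ B, y b = a₀) ∧
      (∃ T, f^[T] y = fun _ => a₀) ∧ ∃ n, ∃ s ∈ Q, f^[n] y s ≠ a₀) : False := by
  set M : Set (Ω → A) := {y | SuppIn a₀ y (sat Γ F) ∧
      (∃ S : Set Ω, S.Finite ∧ SuppIn a₀ y S) ∧ ∃ T, f^[T] y = fun _ => a₀} with hMdef
  have hMne : M.Nonempty := ⟨fun _ => a₀, fun _ _ => rfl, ⟨∅, Set.finite_empty, fun _ _ => rfl⟩,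
    0, rfl⟩
  obtain ⟨P, ⟨hPF, ⟨S, hS, hPS⟩, T, hT⟩, D, hD, n₀, hblock⟩ :=
    baire a₀ f h.cont h.an M hMne Q hQ
  obtain ⟨W, hW, hwin⟩ := window h (⊥ : Subgroup Γ) hF' hQ hc hPF hS (by rwa [sat_bot]) hT M
    (fun y hy => hy.1) (by
      rintro y ⟨hyF, ⟨S', hS', hyS'⟩, T', hT'⟩ hgl
      refine ⟨glue_supp hPF hyF, ⟨S ∪ S', hS.union hS', glue_supp (hPS.mono subset_union_left)
        (hyS'.mono subset_union_right)⟩, T' + T, ?_⟩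
      rw [Function.iterate_add_apply, hgl, ← Function.iterate_add_apply]
      exact h.dead hT' (by omega)) hD hblock
  obtain ⟨y, hyF, hyS, hyB, hyT, n, s, hs, hne⟩ := hv W hW
  exact hne (hwin y ⟨hyF, hyS, hyT⟩ (by rwa [sat_bot]) n s hs)

end sys
end NilCA

namespace NilCA
set_option linter.unusedSectionVars false
set_option linter.style.haveILetI false
open Set

/-- Finitely supported configurations. -/
def FinSupp {Ω A : Type} (a₀ : A) (x : Ω → A) : Prop := ∃ S : Set Ω, S.Finite ∧ SuppIn a₀ x S

/-- Two-step goodness. -/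
def Good2 (Γ : Type) [Group Γ] : Prop :=
  ∀ (Ω A : Type) [MulAction Γ Ω] [Finite A] [TopologicalSpace A] [DiscreteTopology A]
    (a₀ : A) (f : (Ω → A) → (Ω → A)), Sys Γ a₀ f →
    ∀ F0 F1 F2 : Set Ω, F0.Finite → F1.Finite → F2.Finite → F0 ⊆ F1 → F1 ⊆ F2 →
    Conf Γ a₀ f F0 F1 → Conf Γ a₀ f F1 F2 →
    ∀ x, SuppIn a₀ x (sat Γ F0) → FinSupp a₀ x → ∃ n, f^[n] x = fun _ => a₀

/-- Goodness for fully confined systems. -/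
def GoodInf (Γ : Type) [Group Γ] : Prop :=
  ∀ (Ω A : Type) [MulAction Γ Ω] [Finite A] [TopologicalSpace A] [DiscreteTopology A]
    (a₀ : A) (f : (Ω → A) → (Ω → A)), Sys Γ a₀ f →
    (∀ F : Set Ω, F.Finite → ∃ F' : Set Ω, F'.Finite ∧ Conf Γ a₀ f F F') →
    ∀ x, FinSupp a₀ x → ∃ n, f^[n] x = fun _ => a₀

lemma Conf.mono_right {Γ : Type} [Group Γ] {Ω A : Type} [MulAction Γ Ω] {a₀ : A}
    {f : (Ω → A) → (Ω → A)} {F F' F'' : Set Ω} (h : Conf Γ a₀ f F F') (hs : F' ⊆ F'') :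
    Conf Γ a₀ f F F'' := fun x hx n => (h x hx n).mono (sat_mono hs)

lemma exists_chain {Γ : Type} [Group Γ] {Ω A : Type} [MulAction Γ Ω] {a₀ : A}
    {f : (Ω → A) → (Ω → A)}
    (hc : ∀ F : Set Ω, F.Finite → ∃ F' : Set Ω, F'.Finite ∧ Conf Γ a₀ f F F')
    (F : Set Ω) (hF : F.Finite) : ∃ F' : Set Ω, F'.Finite ∧ F ⊆ F' ∧ Conf Γ a₀ f F F' := by
  obtain ⟨F', hF', h⟩ := hc F hF
  exact ⟨F ∪ F', hF.union hF', subset_union_left, h.mono_right subset_union_right⟩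

lemma Good2.inf {Γ : Type} [Group Γ] (h : Good2 Γ) : GoodInf Γ := by
  intro Ω A _ _ _ _ a₀ f hs hc x ⟨S, hS, hx⟩
  obtain ⟨F1, hF1, h1, hc1⟩ := exists_chain hc S hS
  obtain ⟨F2, hF2, h2, hc2⟩ := exists_chain hc F1 hF1
  exact h Ω A a₀ f hs S F1 F2 hS hF1 hF2 h1 h2 hc1 hc2 x (hx.mono (subset_sat _)) ⟨S, hS, hx⟩

section hom
variable {Λ Γ : Type} [Group Λ] [Group Γ] (φ : Λ →* Γ)

lemma exists_reps (H : Subgroup Γ) [H.FiniteIndex] :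
    ∃ R : Set Γ, R.Finite ∧ ∀ γ : Γ, ∃ h ∈ H, ∃ r ∈ R, γ = h * r := by
  refine ⟨Set.range (fun q : Γ ⧸ H => (q.out)⁻¹), Set.finite_range _, fun γ => ?_⟩
  obtain ⟨k, hk⟩ := QuotientGroup.mk_out_eq_mul H γ⁻¹
  refine ⟨(k : Γ), k.2, _, ⟨(γ⁻¹ : Γ), rfl⟩, ?_⟩
  simp only [hk]
  group

lemma sys_hom {Ω A : Type} [MulAction Γ Ω] [Finite A] [TopologicalSpace A] [DiscreteTopology A]
    {a₀ : A} {f : (Ω → A) → (Ω → A)} (hφ : Function.Injective φ) (h : Sys Γ a₀ f) :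
    @Sys Λ _ Ω A (MulAction.compHom Ω φ) _ a₀ f := by
  letI := MulAction.compHom Ω φ
  exact ⟨fun γ ω hω => hφ (by rw [map_one]; exact h.free (φ γ) ω hω), h.cont,
    fun γ x => h.equi (φ γ) x, h.an⟩

lemma sat_hom {Ω : Type} [MulAction Γ Ω] {R : Set Γ}
    (hR : ∀ γ : Γ, ∃ h ∈ φ.range, ∃ r ∈ R, γ = h * r) (F : Set Ω) :
    @sat Λ _ Ω (MulAction.compHom Ω φ) (Set.image2 (fun r s => r • s) R F) = sat Γ F := by
  letI := MulAction.compHom Ω φ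
  ext ω
  constructor
  · rintro ⟨l, _, ⟨r, hr, s, hs, rfl⟩, rfl⟩
    exact ⟨φ l * r, s, hs, mul_smul _ _ _⟩
  · rintro ⟨γ, s, hs, rfl⟩
    obtain ⟨_, ⟨l, rfl⟩, r, hr, rfl⟩ := hR γ
    exact ⟨l, _, ⟨r, hr, s, hs, rfl⟩, (mul_smul (φ l) r s).symm⟩

lemma sat_hom_le {Ω : Type} [MulAction Γ Ω] (F : Set Ω) :
    @sat Λ _ Ω (MulAction.compHom Ω φ) F ⊆ sat Γ F := by
  letI := MulAction.compHom Ω φ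
  rintro ω ⟨l, s, hs, rfl⟩
  exact ⟨φ l, s, hs, rfl⟩

lemma Good2.hom (h : Good2 Λ) (hφ : Function.Injective φ) [φ.range.FiniteIndex] : Good2 Γ := by
  intro Ω A _ _ _ _ a₀ f hs F0 F1 F2 hF0 hF1 hF2 h01 h12 hc0 hc1 x hx hxf
  obtain ⟨R, hR, hrep⟩ := exists_reps φ.range
  letI act := MulAction.compHom Ω φ
  refine @h Ω A act _ _ _ a₀ f (sys_hom φ hφ hs) _ _ _ (hR.image2 (fun r s => r • s) hF0)
    (hR.image2 (fun r s => r • s) hF1) (hR.image2 (fun r s => r • s) hF2)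
    (Set.image2_subset_left h01) (Set.image2_subset_left h12) ?_ ?_ x ?_ hxf
  · intro y hy n
    rw [sat_hom φ hrep] at hy ⊢
    exact hc0 y hy n
  · intro y hy n
    rw [sat_hom φ hrep] at hy ⊢
    exact hc1 y hy n
  · rwa [sat_hom φ hrep]

lemma GoodInf.hom (h : GoodInf Λ) (hφ : Function.Injective φ) [φ.range.FiniteIndex] :
    GoodInf Γ := by
  intro Ω A _ _ _ _ a₀ f hs hc x hxf
  obtain ⟨R, hR, hrep⟩ := exists_reps φ.range
  letI act := MulAction.compHom Ω φ
  refine @h Ω A act _ _ _ a₀ f (sys_hom φ hφ hs) ?_ x hxf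
  intro F hF
  obtain ⟨F', hF', h'⟩ := hc F hF
  refine ⟨_, hR.image2 (fun r s => r • s) hF', fun y hy n => ?_⟩
  rw [sat_hom φ hrep]
  exact h' y (hy.mono (sat_hom_le φ F)) n

end hom

section sub
variable {Γ : Type} [Group Γ] {Ω A : Type} [MulAction Γ Ω]
  [Finite A] [TopologicalSpace A] [DiscreteTopology A] {a₀ : A} {f : (Ω → A) → (Ω → A)}

lemma Sys.sub (h : Sys Γ a₀ f) (M : Subgroup Γ) : Sys M a₀ f :=
  ⟨fun γ ω hω => Subtype.ext (h.free (γ : Γ) ω hω), h.cont, fun γ x => h.equi (γ : Γ) x, h.an⟩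

end sub

lemma good2_local {Γ : Type} [Group Γ] (H : ∀ M : Subgroup Γ, M.FG → Good2 M) : Good2 Γ := by
  intro Ω A _ _ _ _ a₀ f hs F0 F1 F2 hF0 hF1 hF2 h01 h12 hc0 hc1 x hx ⟨S, hS, hxS⟩
  obtain ⟨E, hE, hloc⟩ := hs.unif_loc hF2 1
  set Δ : Set Γ := {δ | ∃ e ∈ E, δ • e ∈ F2} with hΔ
  have hΔf : Δ.Finite := transporter_finite hs.free hE hF2
  set Δ' : Set Γ := {δ | ∃ e ∈ F0, δ • e ∈ S} with hΔ'
  have hΔf' : Δ'.Finite := transporter_finite hs.free hF0 hS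
  set M : Subgroup Γ := Subgroup.closure (Δ ∪ Δ') with hM
  have hMfg : M.FG := by
    rw [Subgroup.fg_iff]
    exact ⟨_, rfl, hΔf.union hΔf'⟩
  have key : ∀ Fi : Set Ω, Fi ⊆ F2 → ∀ z, SuppIn a₀ z (sat M F2) → SuppIn a₀ (f z) (sat Γ Fi) →
      SuppIn a₀ (f z) (sat M Fi) := by
    intro Fi hFi z hz hfz ω hω
    by_contra hne
    have hωΓ : ω ∈ sat Γ Fi := by
      by_contra hh
      exact hne (hfz ω hh)
    obtain ⟨γ, s, hsF, rfl⟩ := hωΓ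
    have hex : ∃ e ∈ E, z (γ • e) ≠ a₀ := by
      by_contra hh
      push Not at hh
      have := hloc s (hFi hsF) γ z (fun _ => a₀) hh
      rw [hs.iter_zero] at this
      exact hne this
    obtain ⟨e, he, hze⟩ := hex
    have hmem : γ • e ∈ sat M F2 := by
      by_contra hh
      exact hze (hz _ hh)
    obtain ⟨m, t, ht, hmt⟩ := hmem
    have h1 : (m : Γ)⁻¹ * γ ∈ M := by
      apply Subgroup.subset_closure
      left
      refine ⟨e, he, ?_⟩
      rw [mul_smul, ← hmt]
      show (m : Γ)⁻¹ • ((m : Γ) • t) ∈ F2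
      rwa [inv_smul_smul]
    have h2 : γ ∈ M := by
      have := M.mul_mem m.2 h1
      rwa [mul_inv_cancel_left] at this
    exact hω ⟨⟨γ, h2⟩, s, hsF, rfl⟩
  have conf : ∀ Fi Fj : Set Ω, Fi ⊆ Fj → Fj ⊆ F2 → Conf Γ a₀ f Fi Fj → Conf M a₀ f Fi Fj := by
    intro Fi Fj hij hj hcij y hy n
    induction n with
    | zero => exact hy.mono (sat_mono hij)
    | succ n ih =>
      have h3 := hcij y (hy.mono (sat_subgroup_le M _)) (n + 1)
      rw [Function.iterate_succ_apply'] at h3 ⊢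
      exact key Fj hj _ (ih.mono (sat_mono hj)) h3
  refine H M hMfg Ω A a₀ f (hs.sub M) F0 F1 F2 hF0 hF1 hF2 h01 h12 (conf _ _ h01 h12 hc0)
    (conf _ _ h12 subset_rfl hc1) x ?_ ⟨S, hS, hxS⟩
  intro ω hω
  by_cases h1 : ω ∈ S
  · by_cases h2 : ω ∈ sat Γ F0
    · obtain ⟨γ, s, hsF, rfl⟩ := h2
      exact absurd ⟨⟨γ, Subgroup.subset_closure (Or.inr ⟨s, hsF, h1⟩)⟩, s, hsF, rfl⟩ hω
    · exact hx ω h2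
  · exact hxS ω h1

section quot
variable {Γ : Type} [Group Γ] (L : Subgroup Γ) [hL : L.Normal] (Ω : Type) [MulAction Γ Ω]

/-- The action of the quotient group on the orbit space. -/
def quotAct : MulAction (Γ ⧸ L) (MulAction.orbitRel.Quotient L Ω) where
  smul := Quotient.map₂ (fun (γ : Γ) (ω : Ω) => γ • ω) (by
    rintro γ γ' hγ ω ω' hω
    have h1 : γ⁻¹ * γ' ∈ L := QuotientGroup.leftRel_apply.1 hγ
    obtain ⟨l, rfl⟩ := MulAction.orbitRel_apply.1 hω
    refine MulAction.orbitRel_apply.2 ⟨⟨γ * (l : Γ) * (γ⁻¹ * γ')⁻¹ * γ⁻¹,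
      by simpa only [mul_assoc] using
        hL.conj_mem _ (L.mul_mem l.2 (L.inv_mem h1)) γ⟩, ?_⟩
    show (γ * (l : Γ) * (γ⁻¹ * γ')⁻¹ * γ⁻¹) • (γ' • ω') = γ • ((l : Γ) • ω')
    rw [smul_smul, smul_smul]
    congr 1
    group)
  one_smul := by
    rintro ⟨ω⟩
    exact congrArg (Quotient.mk _) (one_smul Γ ω)
  mul_smul := by
    rintro ⟨γ⟩ ⟨δ⟩ ⟨ω⟩
    exact congrArg (Quotient.mk _) (mul_smul γ δ ω)

end quot

section quot2
variable {Γ : Type} [Group Γ] (L : Subgroup Γ) [hL : L.Normal] {Ω A : Type} [MulAction Γ Ω]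
  [Finite A] [TopologicalSpace A] [DiscreteTopology A] {a₀ : A} {f : (Ω → A) → (Ω → A)}

/-- Projection to the orbit space. -/
def prj (ω : Ω) : MulAction.orbitRel.Quotient L Ω := Quotient.mk _ ω

lemma prj_eq {ω ω' : Ω} : prj L ω = prj L ω' ↔ ∃ l ∈ L, l • ω' = ω := by
  unfold prj
  rw [Quotient.eq]
  constructor
  · intro h
    obtain ⟨l, hl⟩ := MulAction.orbitRel_apply.1 h
    exact ⟨l, l.2, hl⟩
  · rintro ⟨l, hl, h⟩
    exact MulAction.orbitRel_apply.2 ⟨⟨l, hl⟩, h⟩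

/-- The induced map. -/
noncomputable def qmap (f : (Ω → A) → (Ω → A)) :
    (MulAction.orbitRel.Quotient L Ω → A) → (MulAction.orbitRel.Quotient L Ω → A) :=
  fun x q => f (fun ω => x (prj L ω)) q.out

lemma qmap_apply (h : Sys Γ a₀ f) (x : MulAction.orbitRel.Quotient L Ω → A) (ω : Ω) :
    qmap L f x (prj L ω) = f (fun ω => x (prj L ω)) ω := by
  unfold qmap
  have h1 : prj L (Quotient.out (prj L ω)) = prj L ω := Quotient.out_eq _
  obtain ⟨l, hl, h2⟩ := (prj_eq L).1 h1
  rw [← h2]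
  have h3 := congrFun (h.equi l (fun ω => x (prj L ω))) ω
  rw [← h3]
  congr 1
  ext ω'
  congr 1
  exact ((prj_eq L).2 ⟨l, hl, rfl⟩)

lemma qmap_iter (h : Sys Γ a₀ f) (n : ℕ) (x : MulAction.orbitRel.Quotient L Ω → A) (ω : Ω) :
    (qmap L f)^[n] x (prj L ω) = f^[n] (fun ω => x (prj L ω)) ω := by
  induction n generalizing ω with
  | zero => rfl
  | succ n ih =>
    rw [Function.iterate_succ_apply', qmap_apply L h, Function.iterate_succ_apply']
    congr 1
    ext ω'
    exact ih ω'

lemma prj_surj : Function.Surjective (prj L : Ω → _) := Quotient.mk_surjective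

lemma sys_quot (h : Sys Γ a₀ f) :
    @Sys (Γ ⧸ L) _ (MulAction.orbitRel.Quotient L Ω) A (quotAct L Ω) _ a₀ (qmap L f) := by
  letI := quotAct L Ω
  refine ⟨?_, ?_, ?_, ?_⟩
  · intro γ q hq
    obtain ⟨γ, rfl⟩ := QuotientGroup.mk_surjective γ
    obtain ⟨ω, rfl⟩ := prj_surj L q
    have : prj L (γ • ω) = prj L ω := hq
    obtain ⟨l, hl, h1⟩ := (prj_eq L).1 this
    have h2 : (γ⁻¹ * l) • ω = ω := by rw [mul_smul, h1, inv_smul_smul]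
    have h3 := h.free _ _ h2
    rw [QuotientGroup.eq_one_iff, inv_mul_eq_one.1 h3]
    exact hl
  · unfold qmap
    refine continuous_pi fun q => ?_
    refine (continuous_apply _).comp (h.cont.comp ?_)
    exact continuous_pi fun ω => continuous_apply _
  · intro γ x
    obtain ⟨γ, rfl⟩ := QuotientGroup.mk_surjective γ
    ext q
    obtain ⟨ω, rfl⟩ := prj_surj L q
    rw [qmap_apply L h]
    show _ = qmap L f x (prj L (γ • ω))
    rw [qmap_apply L h]
    exact congrFun (h.equi γ (fun ω => x (prj L ω))) ω
  · intro x q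
    obtain ⟨ω, rfl⟩ := prj_surj L q
    obtain ⟨N, hN⟩ := h.an (fun ω => x (prj L ω)) ω
    exact ⟨N, fun n hn => by rw [qmap_iter L h]; exact hN n hn⟩

lemma sat_quot (F : Set Ω) (ω : Ω) :
    prj L ω ∈ @sat (Γ ⧸ L) _ (MulAction.orbitRel.Quotient L Ω) (quotAct L Ω) (prj L '' F) ↔
      ω ∈ sat Γ F := by
  letI := quotAct L Ω
  constructor
  · rintro ⟨γ, _, ⟨s, hs, rfl⟩, h⟩
    obtain ⟨γ, rfl⟩ := QuotientGroup.mk_surjective γ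
    have h1 : prj L (γ • s) = prj L ω := h
    obtain ⟨l, hl, h2⟩ := (prj_eq L).1 h1
    exact ⟨l⁻¹ * γ, s, hs, by rw [mul_smul, ← h2, inv_smul_smul]⟩
  · rintro ⟨γ, s, hs, rfl⟩
    exact ⟨(γ : Γ ⧸ L), _, ⟨s, hs, rfl⟩, rfl⟩

lemma conf_quot (h : Sys Γ a₀ f) {F F' : Set Ω} (hc : Conf Γ a₀ f F F') :
    @Conf (Γ ⧸ L) _ (MulAction.orbitRel.Quotient L Ω) A (quotAct L Ω) a₀ (qmap L f)
      (prj L '' F) (prj L '' F') := by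
  letI := quotAct L Ω
  intro x hx n q hq
  obtain ⟨ω, rfl⟩ := prj_surj L q
  rw [qmap_iter L h]
  refine hc _ ?_ n ω ?_
  · intro ω' hω'
    exact hx _ (by rwa [sat_quot])
  · rwa [sat_quot] at hq

/-- Periodic points with finitely many orbits in their support are mortal. -/
def PerMortal {Ω A : Type} [MulAction Γ Ω] (a₀ : A) (f : (Ω → A) → (Ω → A)) (F : Set Ω) : Prop :=
  ∀ P : Ω → A, (∀ l ∈ L, ∀ ω, P (l • ω) = P ω) → (∃ D : Set Ω, D.Finite ∧ SuppIn a₀ P (sat L D)) →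
    SuppIn a₀ P (sat Γ F) → ∃ T, f^[T] P = fun _ => a₀

lemma quot_lift (h : Sys Γ a₀ f) {F : Set Ω}
    (hm : ∀ x : MulAction.orbitRel.Quotient L Ω → A,
      SuppIn a₀ x (@sat (Γ ⧸ L) _ (MulAction.orbitRel.Quotient L Ω) (quotAct L Ω) (prj L '' F)) →
      FinSupp a₀ x → ∃ n, (qmap L f)^[n] x = fun _ => a₀) : PerMortal L a₀ f F := by
  rintro P hP ⟨D, hD, hPD⟩ hPF
  have hfac : ∀ ω, P (Quotient.out (prj L ω)) = P ω := by
    intro ω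
    have h1 : prj L (Quotient.out (prj L ω)) = prj L ω := Quotient.out_eq _
    obtain ⟨l, hl, h2⟩ := (prj_eq L).1 h1
    rw [← h2, hP l hl]
  have hfac' : (fun ω => P (Quotient.out (prj L ω))) = P := funext hfac
  have hA : SuppIn a₀ (fun q => P q.out) (@sat (Γ ⧸ L) _ (MulAction.orbitRel.Quotient L Ω)
      (quotAct L Ω) (prj L '' F)) := by
    intro q hq
    obtain ⟨ω, rfl⟩ := prj_surj L q
    rw [sat_quot] at hq
    show P (Quotient.out (prj L ω)) = a₀
    rw [hfac]
    exact hPF ω hq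
  have hB : FinSupp a₀ (fun q : MulAction.orbitRel.Quotient L Ω => P q.out) := by
    refine ⟨prj L '' D, hD.image _, ?_⟩
    intro q hq
    obtain ⟨ω, rfl⟩ := prj_surj L q
    show P (Quotient.out (prj L ω)) = a₀
    rw [hfac]
    refine hPD ω ?_
    rintro ⟨l, s, hs, rfl⟩
    exact hq ⟨s, hs, ((prj_eq L).2 ⟨l, l.2, rfl⟩).symm⟩
  obtain ⟨n, hn⟩ := hm _ hA hB
  refine ⟨n, ?_⟩
  ext ω
  have h5 := qmap_iter L h n (fun q => P q.out) ω
  rw [hn] at h5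
  have h6 : (fun ω => (fun q : MulAction.orbitRel.Quotient L Ω => P q.out) (prj L ω)) = P := hfac'
  rw [h6] at h5
  exact h5.symm

lemma Good2.perMortal (h : Sys Γ a₀ f) (hg : Good2 (Γ ⧸ L)) {F0 F1 F2 : Set Ω} (hF0 : F0.Finite)
    (hF1 : F1.Finite) (hF2 : F2.Finite) (h01 : F0 ⊆ F1) (h12 : F1 ⊆ F2)
    (hc0 : Conf Γ a₀ f F0 F1) (hc1 : Conf Γ a₀ f F1 F2) : PerMortal L a₀ f F0 := by
  letI := quotAct L Ω
  exact quot_lift L h (hg _ A a₀ (qmap L f) (sys_quot L h) _ _ _ (hF0.image _) (hF1.image _)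
    (hF2.image _) (Set.image_mono h01) (Set.image_mono h12) (conf_quot L h hc0)
    (conf_quot L h hc1))

lemma GoodInf.perMortal (h : Sys Γ a₀ f) (hg : GoodInf (Γ ⧸ L))
    (hc : ∀ F : Set Ω, F.Finite → ∃ F' : Set Ω, F'.Finite ∧ Conf Γ a₀ f F F') (F : Set Ω) :
    PerMortal L a₀ f F := by
  letI := quotAct L Ω
  refine quot_lift L h (fun x _ => hg _ A a₀ (qmap L f) (sys_quot L h) ?_ x)
  intro K hK
  obtain ⟨F', hF', h'⟩ := hc (Quotient.out '' K) (hK.image _)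
  refine ⟨prj L '' F', hF'.image _, ?_⟩
  have h3 := conf_quot L h h'
  have : prj L '' (Quotient.out '' K) = K := by
    rw [Set.image_image]
    have : ∀ q : MulAction.orbitRel.Quotient L Ω, prj L (Quotient.out q) = q :=
      fun q => Quotient.out_eq q
    simp [this]
  rwa [this] at h3

end quot2

/-- Periodization argument: confinement along `L`. -/
lemma conf_of_per {Γ : Type} [Group Γ] {Ω A : Type} [MulAction Γ Ω]
    [Finite A] [TopologicalSpace A] [DiscreteTopology A] {a₀ : A} {f : (Ω → A) → (Ω → A)}
    (h : Sys Γ a₀ f) (L : Subgroup Γ) [L.Normal] {F F' : Set Ω}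
    (hF' : F'.Finite) (hc : Conf Γ a₀ f F F')
    (hper : ∀ E : Set Γ, E.Finite → ∃ L' : Subgroup Γ, L' ≤ L ∧ (∀ e ∈ E, e ∈ L' → e = 1) ∧
      PerMortal L' a₀ f F)
    {K : Set Ω} (hK : K.Finite) (hKF : K ⊆ sat Γ F) :
    ∃ K' : Set Ω, K'.Finite ∧ Conf L a₀ f K K' := by
  classical
  obtain ⟨x₀, hx₀, D, hD, n₀, hblock⟩ := baire a₀ f h.cont h.an {x | SuppIn a₀ x (sat Γ F)}
    ⟨fun _ => a₀, fun _ _ => rfl⟩ F' hF'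
  obtain ⟨L', hL', hE, hmort⟩ := hper _ (transporter_finite h.free hD hD)
  have hP : ∃ P : Ω → A, (∀ l ∈ L', ∀ ω, P (l • ω) = P ω) ∧ SuppIn a₀ P (sat L' D) ∧
      (∀ d ∈ D, P d = x₀ d) ∧ SuppIn a₀ P (sat Γ F) := by
    let P : Ω → A := fun ω => if hω : ∃ d ∈ D, ∃ l ∈ L', l • d = ω then x₀ hω.choose else a₀
    have hPv : ∀ d ∈ D, ∀ l ∈ L', P (l • d) = x₀ d := by
      intro d hd l hl
      have hω : ∃ d' ∈ D, ∃ l' ∈ L', l' • d' = l • d := ⟨d, hd, l, hl, rfl⟩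
      have h1 : P (l • d) = x₀ hω.choose := dif_pos hω
      rw [h1]
      obtain ⟨hd', l', hl', h2⟩ := hω.choose_spec
      set d' := hω.choose
      have h3 : (l⁻¹ * l') • d' = d := by rw [mul_smul, h2, inv_smul_smul]
      have h4 := hE (l⁻¹ * l') ⟨d', hd', by rw [h3]; exact hd⟩
        (L'.mul_mem (L'.inv_mem hl) hl')
      rw [h4, one_smul] at h3
      rw [h3]
    have hP0 : SuppIn a₀ P (sat L' D) := by
      intro ω hω
      apply dif_neg
      rintro ⟨d, hd, l, hl, h1⟩
      exact hω ⟨⟨l, hl⟩, d, hd, h1⟩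
    refine ⟨P, ?_, hP0, ?_, ?_⟩
    · intro l hl ω
      by_cases hω : ω ∈ sat L' D
      · obtain ⟨l', d, hd, rfl⟩ := hω
        have e1 : P (l' • d) = x₀ d := hPv d hd l' l'.2
        have e2 : P ((l * l') • d) = x₀ d := hPv d hd _ (L'.mul_mem hl l'.2)
        rw [e1, ← e2, mul_smul]; rfl
      · rw [hP0 ω hω, hP0]
        intro hh
        exact hω ((smul_mem_sat (⟨l, hl⟩ : L')).1 hh)
    · intro d hd
      simpa using hPv d hd 1 L'.one_mem
    · intro ω hω
      by_cases hω' : ω ∈ sat L' D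
      · obtain ⟨l', d, hd, rfl⟩ := hω'
        have e1 : P (l' • d) = x₀ d := hPv d hd l' l'.2
        rw [e1]
        refine hx₀ d fun hh => hω ?_
        exact (smul_mem_sat (l' : Γ)).2 hh
      · exact hP0 ω hω'
  obtain ⟨P, hPper, hPL, hPD, hPF⟩ := hP
  obtain ⟨T, hT⟩ := hmort P hPper ⟨D, hD, hPL⟩ hPF
  have hPL' : SuppIn a₀ P (sat L D) := hPL.mono (by
    rintro _ ⟨l, d, hd, rfl⟩
    exact ⟨⟨l, hL' l.2⟩, d, hd, rfl⟩)
  obtain ⟨W, hW, hwin⟩ := window h L hF' hF' hc hPF hD hPL' hT {x | SuppIn a₀ x (sat Γ F)}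
    (fun y hy => hy) (fun y hy _ => glue_supp hPF hy) hD
    (fun z hz hzd => hblock z hz (fun d hd => by rw [hzd d hd, hPD d hd]))
  exact conf_of_window h L hF' hc hW hwin hK hKF

/-- Intersections of saturations. -/
lemma inter_sat_finite {Γ : Type} [Group Γ] {Ω : Type} [MulAction Γ Ω]
    (hfree : ∀ (γ : Γ) (ω : Ω), γ • ω = ω → γ = 1) {ι : Type} [Finite ι] (L : ι → Subgroup Γ)
    (hfin : Finite (⨅ i, L i : Subgroup Γ)) (K : ι → Set Ω) (hK : ∀ i, (K i).Finite)
    (F : Set Ω) (hF : F.Finite) : (sat Γ F ∩ ⋂ i, sat (L i) (K i)).Finite := by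
  classical
  have hK' : ∀ i, Finite (K i) := fun i => (hK i)
  have hF' : Finite F := hF
  have hcode : ∀ p : (sat Γ F ∩ ⋂ i, sat (L i) (K i) : Set Ω), ∃ c : F × ((i : ι) → K i),
      ∃ γ : Γ, γ • (c.1 : Ω) = p.1 ∧ ∀ i, ∃ l ∈ L i, l • (c.2 i : Ω) = p.1 := by
    rintro ⟨p, ⟨γ, s, hs, hp⟩, hp2⟩
    have : ∀ i, ∃ k : K i, ∃ l ∈ L i, l • (k : Ω) = p := by
      intro i
      obtain ⟨l, k, hk, h1⟩ := mem_iInter.1 hp2 i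
      exact ⟨⟨k, hk⟩, l, l.2, h1⟩
    choose k hk using this
    exact ⟨⟨⟨s, hs⟩, k⟩, γ, hp, hk⟩
  choose code hcode using hcode
  rw [← Set.finite_coe_iff, ← Set.finite_univ_iff]
  refine Set.Finite.of_finite_fibers code (Set.toFinite _) ?_
  intro c _
  rw [Set.univ_inter]
  by_cases hne : (code ⁻¹' {c}).Nonempty
  · obtain ⟨p₀, hp₀⟩ := hne
    have : (code ⁻¹' {c}) ⊆ Subtype.val ⁻¹' (Set.range
        (fun g : (⨅ i, L i : Subgroup Γ) => (g : Γ) • p₀.1)) := by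
      intro p hp
      obtain ⟨γ, h1, h2⟩ := hcode p
      obtain ⟨γ₀, h3, h4⟩ := hcode p₀
      rw [show code p = c from hp] at h1 h2
      rw [show code p₀ = c from hp₀] at h3 h4
      have h5 : (γ * γ₀⁻¹) • p₀.1 = p.1 := by rw [mul_smul, ← h3, inv_smul_smul, h1]
      refine ⟨⟨γ * γ₀⁻¹, ?_⟩, h5⟩
      rw [Subgroup.mem_iInf]
      intro i
      obtain ⟨l, hl, e1⟩ := h2 i
      obtain ⟨l₀, hl₀, e2⟩ := h4 i
      have h6 : (l * l₀⁻¹) • p₀.1 = p.1 := by rw [mul_smul, ← e2, inv_smul_smul, e1]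
      have h7 : ((l * l₀⁻¹)⁻¹ * (γ * γ₀⁻¹)) • p₀.1 = p₀.1 := by
        rw [mul_smul, h5, ← h6, inv_smul_smul]
      have h8 := hfree _ _ h7
      rw [← inv_mul_eq_one.1 h8]
      exact (L i).mul_mem hl ((L i).inv_mem hl₀)
    refine Set.Finite.subset ?_ this
    exact (Set.finite_range _).preimage Subtype.val_injective.injOn
  · rw [Set.not_nonempty_iff_eq_empty.1 hne]
    exact Set.finite_empty

lemma good2_multi {Γ : Type} [Group Γ] {ι : Type} [Finite ι] (L : ι → Subgroup Γ)
    (hn : ∀ i, (L i).Normal) (hfin : Finite (⨅ i, L i : Subgroup Γ))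
    (hq : ∀ i, ∀ E : Set Γ, E.Finite → ∃ L' : Subgroup Γ, ∃ _ : L'.Normal, L' ≤ L i ∧
      (∀ e ∈ E, e ∈ L' → e = 1) ∧ Good2 (Γ ⧸ L')) : Good2 Γ := by
  intro Ω A _ _ _ _ a₀ f hs F0 F1 F2 hF0 hF1 hF2 h01 h12 hc0 hc1 x hx ⟨S, hS, hxS⟩
  have key : ∀ i, ∃ K' : Set Ω, K'.Finite ∧ Conf (L i) a₀ f (S ∩ sat Γ F0) K' := by
    intro i
    have := hn i
    refine conf_of_per hs (L i) hF1 hc0 ?_ (hS.subset inter_subset_left) inter_subset_right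
    intro E hE
    obtain ⟨L', hL'n, hle, hav, hg⟩ := hq i E hE
    exact ⟨L', hle, hav, hg.perMortal L' hs hF0 hF1 hF2 h01 h12 hc0 hc1⟩
  choose K hK hKc using key
  refine hs.fin_mortal (inter_sat_finite hs.free L hfin K hK F1 hF1) (x := x) ?_
  intro n ω hω
  by_cases h1 : ω ∈ sat Γ F1
  · have h2 : ∃ i, ω ∉ sat (L i) (K i) := by
      by_contra hh
      push Not at hh
      exact hω ⟨h1, mem_iInter.2 hh⟩
    obtain ⟨i, hi⟩ := h2
    refine hKc i x ?_ n ω hi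
    intro ω' hω'
    by_contra hne
    apply hω'
    apply subset_sat
    constructor
    · by_contra hh; exact hne (hxS _ hh)
    · by_contra hh; exact hne (hx _ hh)
  · exact hc0 x hx n ω h1

lemma goodInf_ext {Γ : Type} [Group Γ] (L : Subgroup Γ) [L.Normal] (hLg : GoodInf L)
    (hq : ∀ E : Set Γ, E.Finite → ∃ L' : Subgroup Γ, ∃ _ : L'.Normal, L' ≤ L ∧
      (∀ e ∈ E, e ∈ L' → e = 1) ∧ GoodInf (Γ ⧸ L')) : GoodInf Γ := by
  intro Ω A _ _ _ _ a₀ f hs hc x hx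
  refine hLg Ω A a₀ f (hs.sub L) ?_ x hx
  intro K hK
  obtain ⟨F', hF', hcF⟩ := hc K hK
  refine conf_of_per hs L hF' hcF ?_ hK (subset_sat K)
  intro E hE
  obtain ⟨L', hL'n, hle, hav, hg⟩ := hq E hE
  exact ⟨L', hle, hav, hg.perMortal L' hs hc K⟩

end NilCA

namespace NilCA
set_option linter.unusedSectionVars false
set_option linter.style.haveILetI false
open Set

lemma finite_sub_bound {Ω : Type} (ht : Ω → ℤ) {E : Set Ω} (hE : E.Finite) :
    ∃ r : ℕ, ∀ e ∈ E, -(r : ℤ) ≤ ht e ∧ ht e ≤ r := by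
  obtain ⟨b, hb⟩ := (hE.image (fun e => (ht e).natAbs)).bddAbove
  refine ⟨b, fun e he => ?_⟩
  have : (ht e).natAbs ≤ b := hb ⟨e, he, rfl⟩
  omega

/-- Points approximable by mortal points are mortal. -/
lemma mortal_of_approx {Γ : Type} [Group Γ] {Ω A : Type} [MulAction Γ Ω]
    [Finite A] [TopologicalSpace A] [DiscreteTopology A] {a₀ : A} {f : (Ω → A) → (Ω → A)}
    (h : Sys Γ a₀ f) {F F' : Set Ω} (hF' : F'.Finite) (hc : Conf Γ a₀ f F F') {X : Ω → A}
    (hX : SuppIn a₀ X (sat Γ F)) (hXf : FinSupp a₀ X)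
    (hap : ∀ E : Set Ω, E.Finite → ∃ Y : Ω → A, SuppIn a₀ Y (sat Γ F) ∧ FinSupp a₀ Y ∧
      (∃ T, f^[T] Y = fun _ => a₀) ∧ ∀ e ∈ E, Y e = X e) : ∃ T, f^[T] X = fun _ => a₀ := by
  by_contra hnot
  obtain ⟨S, hS, hXS⟩ := hXf
  refine no_visits h hF' hF' hc ?_
  intro B hB
  set Δ : Set Γ := {γ | ∃ b ∈ B, γ • b ∈ S} with hΔ
  have hΔf : Δ.Finite := transporter_finite h.free hB hS
  have hex : ∃ n, ∃ γ : Γ, γ ∉ Δ ∧ ∃ s ∈ F', f^[n] X (γ • s) ≠ a₀ := by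
    by_contra hh
    push Not at hh
    apply hnot
    refine h.fin_mortal (hΔf.image2 (fun γ s => γ • s) hF') (x := X) ?_
    intro n ω hω
    by_cases hωF : ω ∈ sat Γ F'
    · obtain ⟨γ, s, hs, rfl⟩ := hωF
      exact hh n γ (fun hγ => hω ⟨γ, hγ, s, hs, rfl⟩) s hs
    · exact hc X hX n ω hωF
  obtain ⟨n, γ, hγ, s, hs, hne⟩ := hex
  obtain ⟨E, hE, hloc⟩ := h.unif_loc hF' n
  obtain ⟨Y, hYF, ⟨S', hS', hYS'⟩, ⟨T, hT⟩, hYE⟩ :=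
    hap ((fun e => γ • e) '' (E ∪ B)) ((hE.union hB).image _)
  refine ⟨fun ω => Y (γ • ω), fun ω hω => hYF _ (by rwa [smul_mem_sat]),
    ⟨(fun ω => γ⁻¹ • ω) '' S', hS'.image _, fun ω hω => hYS' _ fun hh => hω ⟨_, hh, by simp⟩⟩,
    ?_, ⟨T, ?_⟩, n, s, hs, ?_⟩
  · intro b hb
    show Y (γ • b) = a₀
    rw [hYE _ ⟨b, Or.inr hb, rfl⟩]
    exact hXS _ fun hh => hγ ⟨b, hb, hh⟩
  · rw [h.iter_equi, hT]
  · rw [h.iter_equi]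
    show f^[n] Y (γ • s) ≠ a₀
    rw [hloc s hs γ Y X (fun e he => hYE _ ⟨e, Or.inl he, rfl⟩)]
    exact hne

/-- Integer shift. -/
def Sh {Ω : Type} [MulAction (Multiplicative ℤ) Ω] (k : ℤ) (ω : Ω) : Ω :=
  (Multiplicative.ofAdd k) • ω

section Z
variable {Ω A : Type} [MulAction (Multiplicative ℤ) Ω]
  [Finite A] [TopologicalSpace A] [DiscreteTopology A] {a₀ : A} {f : (Ω → A) → (Ω → A)}

lemma Sh_add (a b : ℤ) (ω : Ω) : Sh (a + b) ω = Sh a (Sh b ω) := by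
  unfold Sh; rw [ofAdd_add, mul_smul]

lemma Sh_zero (ω : Ω) : Sh 0 ω = ω := by
  unfold Sh; rw [ofAdd_zero, one_smul]

lemma exists_height (hfree : ∀ (γ : Multiplicative ℤ) (ω : Ω), γ • ω = ω → γ = 1) :
    ∃ ht : Ω → ℤ, ∀ k ω, ht (Sh k ω) = ht ω + k := by
  let rep : Ω → Ω := fun ω =>
    Quotient.out (Quotient.mk (MulAction.orbitRel (Multiplicative ℤ) Ω) ω)
  have h1 : ∀ ω, ∃ k : ℤ, Sh k (rep ω) = ω := by
    intro ω
    have h2 : (MulAction.orbitRel (Multiplicative ℤ) Ω) ω (rep ω) :=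
      (MulAction.orbitRel (Multiplicative ℤ) Ω).symm
        (Quotient.mk_out (s := MulAction.orbitRel (Multiplicative ℤ) Ω) ω)
    obtain ⟨k, hk⟩ := MulAction.orbitRel_apply.1 h2
    exact ⟨Multiplicative.toAdd k, hk⟩
  choose ht hht using h1
  refine ⟨ht, fun k ω => ?_⟩
  have hrep : rep (Sh k ω) = rep ω := by
    show Quotient.out _ = Quotient.out _
    congr 1
    exact Quotient.sound (s := MulAction.orbitRel (Multiplicative ℤ) Ω)
      (MulAction.orbitRel_apply.2 ⟨Multiplicative.ofAdd k, rfl⟩)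
  have h3 := hht (Sh k ω)
  rw [hrep] at h3
  have h4 : Sh (-(ht ω + k) + ht (Sh k ω)) (rep ω) = rep ω := by
    have h7 : Sh k ω = Sh (k + ht ω) (rep ω) := by rw [Sh_add, hht ω]
    rw [Sh_add, h3, h7, ← Sh_add, show -(ht ω + k) + (k + ht ω) = 0 by ring, Sh_zero]
  have h5 := hfree _ _ h4
  have h6 : -(ht ω + k) + ht (Sh k ω) = 0 := by
    exact Multiplicative.ofAdd.injective (by rw [h5]; rfl)
  linarith

lemma band_finite {ht : Ω → ℤ} (hht : ∀ k ω, ht (Sh k ω) = ht ω + k) {F : Set Ω} (hF : F.Finite)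
    (a b : ℤ) : {ω | ω ∈ sat (Multiplicative ℤ) F ∧ a ≤ ht ω ∧ ht ω ≤ b}.Finite := by
  have : {ω | ω ∈ sat (Multiplicative ℤ) F ∧ a ≤ ht ω ∧ ht ω ≤ b} ⊆
      ⋃ s ∈ F, (fun k => Sh k s) '' Set.Icc (a - ht s) (b - ht s) := by
    rintro _ ⟨⟨k, s, hs, rfl⟩, h1, h2⟩
    have h3 : ht (k • s) = ht s + Multiplicative.toAdd k := hht (Multiplicative.toAdd k) s
    rw [h3] at h1 h2
    refine mem_biUnion hs ⟨Multiplicative.toAdd k, ⟨by linarith, by linarith⟩, rfl⟩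
  exact (hF.biUnion fun s _ => (Set.finite_Icc _ _).image _).subset this

lemma exists_range (h : Sys (Multiplicative ℤ) a₀ f) {ht : Ω → ℤ}
    (hht : ∀ k ω, ht (Sh k ω) = ht ω + k) {F : Set Ω} (hF : F.Finite) (n : ℕ) :
    ∃ r : ℕ, ∀ ω ∈ sat (Multiplicative ℤ) F, ∀ x y : Ω → A,
      (∀ ω', ht ω - r ≤ ht ω' → ht ω' ≤ ht ω + r → x ω' = y ω') → f^[n] x ω = f^[n] y ω := by
  obtain ⟨E, hE, hloc⟩ := h.unif_loc hF n
  obtain ⟨r1, hr1⟩ := finite_sub_bound ht hE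
  obtain ⟨r2, hr2⟩ := finite_sub_bound ht hF
  refine ⟨r1 + r2, ?_⟩
  rintro _ ⟨γ, s, hs, rfl⟩ x y hxy
  refine hloc s hs γ x y (fun e he => hxy _ ?_ ?_)
  all_goals
    have e1 : ht (γ • s) = ht s + Multiplicative.toAdd γ := hht (Multiplicative.toAdd γ) s
    have e2 : ht (γ • e) = ht e + Multiplicative.toAdd γ := hht (Multiplicative.toAdd γ) e
    have := hr1 e he
    have := hr2 s hs
    rw [e1, e2]
    push_cast
    linarith

open Classical in
/-- Cutting a configuration to a set of heights. -/
noncomputable def cut (a₀ : A) (ht : Ω → ℤ) (J : Set ℤ) (x : Ω → A) : Ω → A :=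
  fun ω => if ht ω ∈ J then x ω else a₀

lemma cut_pos {ht : Ω → ℤ} {J : Set ℤ} {x : Ω → A} {ω : Ω} (h : ht ω ∈ J) :
    cut a₀ ht J x ω = x ω := if_pos h

lemma cut_neg {ht : Ω → ℤ} {J : Set ℤ} {x : Ω → A} {ω : Ω} (h : ht ω ∉ J) :
    cut a₀ ht J x ω = a₀ := if_neg h

lemma cut_supp {ht : Ω → ℤ} {J : Set ℤ} {x : Ω → A} {U : Set Ω} (hx : SuppIn a₀ x U) :
    SuppIn a₀ (cut a₀ ht J x) U := by
  intro ω hω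
  unfold cut
  split_ifs
  · exact hx ω hω
  · rfl

lemma cut_iter (h : Sys (Multiplicative ℤ) a₀ f) {ht : Ω → ℤ} {F1 F2 : Set Ω} {r : ℕ}
    (hr : ∀ ω ∈ sat (Multiplicative ℤ) F2, ∀ x y : Ω → A,
      (∀ ω', ht ω - r ≤ ht ω' → ht ω' ≤ ht ω + r → x ω' = y ω') → f^[1] x ω = f^[1] y ω)
    (hc : Conf (Multiplicative ℤ) a₀ f F1 F2) {J : Set ℤ} {z : Ω → A}
    (hz : SuppIn a₀ z (sat (Multiplicative ℤ) F1))
    (hb : ∀ n ω j, ht ω - r ≤ j → j ≤ ht ω + r → (ht ω ∈ J ∧ j ∉ J ∨ ht ω ∉ J ∧ j ∈ J) →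
      f^[n] z ω = a₀) (n : ℕ) :
    f^[n] (cut a₀ ht J z) = cut a₀ ht J (f^[n] z) := by
  induction n with
  | zero => rfl
  | succ n ih =>
    ext ω
    by_cases hω : ω ∈ sat (Multiplicative ℤ) F2
    · rw [Function.iterate_succ_apply', ih]
      by_cases hJ : ht ω ∈ J
      · rw [cut_pos hJ, Function.iterate_succ_apply']
        refine hr ω hω _ _ fun ω' h1 h2 => ?_
        by_cases hJ' : ht ω' ∈ J
        · rw [cut_pos hJ']
        · rw [cut_neg hJ']
          exact (hb n ω' (ht ω) (by linarith) (by linarith) (Or.inr ⟨hJ', hJ⟩)).symm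
      · rw [cut_neg hJ]
        have := hr ω hω (cut a₀ ht J (f^[n] z)) (fun _ => a₀) fun ω' h1 h2 => by
          by_cases hJ' : ht ω' ∈ J
          · rw [cut_pos hJ']
            exact hb n ω' (ht ω) (by linarith) (by linarith) (Or.inl ⟨hJ', hJ⟩)
          · rw [cut_neg hJ']
        rw [h.iter_zero] at this
        exact this
    · rw [hc _ (cut_supp hz) (n + 1) ω hω, cut_supp (hc _ hz (n + 1)) ω hω]

/-- Periodic repetition of a configuration. -/
def rept (ht : Ω → ℤ) (e P : ℤ) (u : Ω → A) : Ω → A :=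
  fun ω => u (Sh (-(P * ((ht ω + e) / P))) ω)

lemma rept_per {ht : Ω → ℤ} (hht : ∀ k ω, ht (Sh k ω) = ht ω + k) (e P : ℤ) (hP : 0 < P)
    (u : Ω → A) (k : ℤ) (ω : Ω) : rept ht e P u (Sh (P * k) ω) = rept ht e P u ω := by
  unfold rept
  rw [hht, ← Sh_add]
  have h1 : (ht ω + P * k + e) / P = (ht ω + e) / P + k := by
    rw [show ht ω + P * k + e = (ht ω + e) + P * k by ring, Int.add_mul_ediv_left _ _ hP.ne']
  rw [h1]
  congr 2
  ring

lemma rept_eq0 {ht : Ω → ℤ} (e P : ℤ) (u : Ω → A) {ω : Ω}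
    (h1 : -e ≤ ht ω) (h2 : ht ω < P - e) : rept ht e P u ω = u ω := by
  unfold rept
  rw [Int.ediv_eq_zero_of_lt (by linarith) (by linarith), mul_zero, neg_zero, Sh_zero]

lemma rept_eq1 {ht : Ω → ℤ} (hht : ∀ k ω, ht (Sh k ω) = ht ω + k) (e P : ℤ) (hP : 0 < P)
    (u : Ω → A) {ω : Ω} (h1 : P - e ≤ ht ω) (h2 : ht ω < 2 * P - e) :
    rept ht e P u ω = u (Sh (-P) ω) := by
  have h3 := rept_per hht e P hP u (-1) ω
  rw [← h3, mul_neg_one]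
  apply rept_eq0 <;> rw [hht] <;> linarith

lemma rept_mortal (h : Sys (Multiplicative ℤ) a₀ f) {ht : Ω → ℤ}
    (hht : ∀ k ω, ht (Sh k ω) = ht ω + k) {F0 F1 : Set Ω} (hF1 : F1.Finite)
    (hc : Conf (Multiplicative ℤ) a₀ f F0 F1) {v : Ω → A}
    (hv : SuppIn a₀ v (sat (Multiplicative ℤ) F0)) {P : ℤ} (hP : 0 < P)
    (hper : ∀ k ω, v (Sh (P * k) ω) = v ω) : ∃ T, f^[T] v = fun _ => a₀ := by
  obtain ⟨N, hN⟩ := h.unif_an v (band_finite hht hF1 0 P)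
  refine ⟨N, ?_⟩
  ext ω
  by_cases hω : ω ∈ sat (Multiplicative ℤ) F1
  · have h1 := congrFun (h.iter_equi N (Multiplicative.ofAdd (P * (-(ht ω / P)))) v) ω
    have h2 : (fun ω => v (Multiplicative.ofAdd (P * (-(ht ω / P))) • ω)) = v := by
      ext ω'
      exact hper _ _
    have h2' : (fun ω' => v (Multiplicative.ofAdd (P * (-(ht ω / P))) • ω')) = v := by
      ext ω'
      exact hper _ _
    rw [h2'] at h1
    rw [h1]
    refine hN N le_rfl _ ⟨(smul_mem_sat _).2 hω, ?_⟩
    have h3 : ht (Multiplicative.ofAdd (P * (-(ht ω / P))) • ω) = ht ω + P * (-(ht ω / P)) :=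
      hht _ _
    rw [h3]
    have h4 := Int.emod_add_mul_ediv (ht ω) P
    have h5 := Int.emod_nonneg (ht ω) hP.ne'
    have h6 := Int.emod_lt_of_pos (ht ω) hP
    constructor <;> linarith
  · exact hc v hv N ω hω

/-- The one-dimensional case. -/
theorem good2_int : Good2 (Multiplicative ℤ) := by
  classical
  intro Ω A _ _ _ _ a₀ f h F0 F1 F2 hF0 hF1 hF2 h01 h12 hc0 hc1 x hx ⟨Sx, hSx, hxS⟩
  obtain ⟨ht, hht⟩ := exists_height h.free
  obtain ⟨r, hr⟩ := exists_range h hht hF2 1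
  set C : Set Ω := F1 ∪ {ω | ω ∈ sat (Multiplicative ℤ) F1 ∧ -(r : ℤ) ≤ ht ω ∧ ht ω ≤ r} with hC
  have hCf : C.Finite := hF1.union (band_finite hht hF1 _ _)
  obtain ⟨x₀, hx₀, D, hD, n₀, hblock⟩ := baire a₀ f h.cont h.an
    {x | SuppIn a₀ x (sat (Multiplicative ℤ) F0)} ⟨fun _ => a₀, fun _ _ => rfl⟩ C hCf
  obtain ⟨r', hr'⟩ := exists_range h hht hF1 n₀
  obtain ⟨d, hd⟩ := finite_sub_bound ht hD
  set u : Ω → A := fun ω => if ω ∈ D then x₀ ω else a₀ with hu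
  have huD : SuppIn a₀ u D := fun ω hω => if_neg hω
  have hux : ∀ ω ∈ D, u ω = x₀ ω := fun ω hω => if_pos hω
  have huF : SuppIn a₀ u (sat (Multiplicative ℤ) F0) := by
    intro ω hω
    by_cases hD' : ω ∈ D
    · rw [hux ω hD']; exact hx₀ ω hω
    · exact huD ω hD'
  have hblk : ∀ y, SuppIn a₀ y (sat (Multiplicative ℤ) F0) → (∀ ω ∈ D, y ω = x₀ ω) →
      ∀ n ≥ n₀, ∀ ω, -(r : ℤ) ≤ ht ω → ht ω ≤ r → f^[n] y ω = a₀ := by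
    intro y hy hyD n hn ω h1 h2
    by_cases hω : ω ∈ sat (Multiplicative ℤ) F1
    · exact hblock y hy hyD n hn ω (Or.inr ⟨hω, h1, h2⟩)
    · exact hc0 y hy n ω hω
  set z : Ω → A := f^[n₀] u with hz
  have hzF : SuppIn a₀ z (sat (Multiplicative ℤ) F1) := hc0 u huF n₀
  have hzb : ∀ n ω, -(r : ℤ) ≤ ht ω → ht ω ≤ r → f^[n] z ω = a₀ := by
    intro n ω h1 h2
    rw [hz, ← Function.iterate_add_apply]
    exact hblk u huF hux _ (by omega) ω h1 h2
  have hzh : ∀ ω, (ht ω < -(d + r' : ℤ) ∨ (d + r' : ℤ) < ht ω) → z ω = a₀ := by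
    intro ω hω
    by_cases hωF : ω ∈ sat (Multiplicative ℤ) F1
    · have := hr' ω hωF u (fun _ => a₀) fun ω' h1 h2 => by
        refine huD ω' fun hh => ?_
        have := hd ω' hh
        rcases hω with h3 | h3 <;> linarith [this.1, this.2]
      rw [h.iter_zero] at this
      exact this
    · exact hzF ω hωF
  set R : Ω → A := cut a₀ ht (Set.Ioi 0) z with hR
  set L : Ω → A := cut a₀ ht (Set.Iio 0) z with hL
  have hRF : SuppIn a₀ R (sat (Multiplicative ℤ) F1) := cut_supp hzF
  have hLF : SuppIn a₀ L (sat (Multiplicative ℤ) F1) := cut_supp hzF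
  have hzS : SuppIn a₀ z {ω | ω ∈ sat (Multiplicative ℤ) F1 ∧ -(d + r' : ℤ) ≤ ht ω ∧
      ht ω ≤ (d + r' : ℤ)} := by
    intro ω hω
    by_cases h1 : ω ∈ sat (Multiplicative ℤ) F1
    · apply hzh
      by_contra hh
      push Not at hh
      exact hω ⟨h1, hh.1, hh.2⟩
    · exact hzF ω h1
  have hRfin : FinSupp a₀ R := ⟨_, band_finite hht hF1 _ _, cut_supp hzS⟩
  have hLfin : FinSupp a₀ L := ⟨_, band_finite hht hF1 _ _, cut_supp hzS⟩
  have hRit : ∀ n, f^[n] R = cut a₀ ht (Set.Ioi 0) (f^[n] z) := fun n => by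
    refine cut_iter h hr hc1 hzF ?_ n
    intro n ω j h1 h2 h3
    simp only [mem_Ioi] at h3
    exact hzb n ω (by omega) (by omega)
  have hLit : ∀ n, f^[n] L = cut a₀ ht (Set.Iio 0) (f^[n] z) := fun n => by
    refine cut_iter h hr hc1 hzF ?_ n
    intro n ω j h1 h2 h3
    simp only [mem_Iio] at h3
    exact hzb n ω (by omega) (by omega)
  have hY : ∀ P : ℤ, 4 * (d + r' + r + 1 : ℤ) < P → ∃ Y : Ω → A,
      SuppIn a₀ Y (sat (Multiplicative ℤ) F1) ∧ FinSupp a₀ Y ∧ (∃ T, f^[T] Y = fun _ => a₀) ∧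
      (∀ ω, 2 * ht ω ≤ P → Y ω = R ω) ∧ (∀ ω, P < 2 * ht ω → Y ω = L (Sh (-P) ω)) := by
    intro P hP
    have hP0 : 0 < P := by omega
    set e : ℤ := d + r' with he
    set v : Ω → A := rept ht e P u with hv
    have hvF : SuppIn a₀ v (sat (Multiplicative ℤ) F0) := by
      intro ω hω
      apply huF
      unfold Sh
      rwa [smul_mem_sat]
    have hvD : ∀ ω ∈ D, v ω = x₀ ω := by
      intro ω hω
      have := hd ω hω
      rw [hv, rept_eq0 e P u (by omega) (by omega), hux ω hω]
    have hvper : ∀ k ω, v (Sh (P * k) ω) = v ω := fun k ω => rept_per hht e P hP0 u k ω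
    obtain ⟨T, hT⟩ := rept_mortal h hht hF1 hc0 hvF hP0 hvper
    set w : Ω → A := f^[n₀] v with hw
    have hwF : SuppIn a₀ w (sat (Multiplicative ℤ) F1) := hc0 v hvF n₀
    have hwb : ∀ n ω, -(r : ℤ) ≤ ht ω → ht ω ≤ r → f^[n] w ω = a₀ := by
      intro n ω h1 h2
      rw [hw, ← Function.iterate_add_apply]
      exact hblk v hvF hvD _ (by omega) ω h1 h2
    have hwper : ∀ n ω, f^[n] w (Sh (-P) ω) = f^[n] w ω := by
      intro n ω
      rw [hw, ← Function.iterate_add_apply]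
      have h1 := congrFun (h.iter_equi (n + n₀) (Multiplicative.ofAdd (-P)) v) ω
      have h2 : (fun ω' => v (Multiplicative.ofAdd (-P) • ω')) = v := by
        ext ω'
        have := hvper (-1) ω'
        rw [mul_neg_one] at this
        exact this
      rw [h2] at h1
      exact h1.symm
    have hwb' : ∀ n ω, P - (r : ℤ) ≤ ht ω → ht ω ≤ P + r → f^[n] w ω = a₀ := by
      intro n ω h1 h2
      rw [← hwper]
      apply hwb <;> rw [hht] <;> linarith
    have hit : ∀ n, f^[n] (cut a₀ ht (Set.Ioo 0 P) w) = cut a₀ ht (Set.Ioo 0 P) (f^[n] w) := by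
      intro n
      refine cut_iter h hr hc1 hwF ?_ n
      intro n ω j h1 h2 h3
      simp only [mem_Ioo] at h3
      by_cases h4 : ht ω ≤ r
      · by_cases h5 : -(r : ℤ) ≤ ht ω
        · exact hwb n ω h5 h4
        · omega
      · exact hwb' n ω (by omega) (by omega)
    refine ⟨cut a₀ ht (Set.Ioo 0 P) w, cut_supp hwF, ⟨_, band_finite hht hF1 0 P, ?_⟩,
      ⟨T, ?_⟩, ?_, ?_⟩
    · intro ω hω
      by_cases h1 : ht ω ∈ Set.Ioo 0 P
      · rw [cut_pos h1]
        exact hwF ω fun hh => hω ⟨hh, h1.1.le, h1.2.le⟩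
      · exact cut_neg h1
    · rw [hit, hw, ← Function.iterate_add_apply, h.dead hT (by omega)]
      ext ω
      unfold cut
      simp
    · intro ω hω
      by_cases h1 : 0 < ht ω
      · rw [cut_pos (show ht ω ∈ Set.Ioo 0 P from ⟨h1, by omega⟩), hR,
          cut_pos (show ht ω ∈ Set.Ioi 0 from h1)]
        by_cases hωF : ω ∈ sat (Multiplicative ℤ) F1
        · refine hr' ω hωF v u fun ω' h2 h3 => ?_
          exact rept_eq0 e P u (by omega) (by omega)
        · rw [hwF ω hωF, hzF ω hωF]
      · rw [cut_neg (fun hh => h1 hh.1), hR, cut_neg (show ht ω ∉ Set.Ioi 0 from h1)]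
    · intro ω hω
      by_cases h1 : ht ω < P
      · rw [cut_pos (show ht ω ∈ Set.Ioo 0 P from ⟨by omega, h1⟩), hL,
          cut_pos (show ht (Sh (-P) ω) ∈ Set.Iio 0 by rw [hht, mem_Iio]; omega)]
        have hzS' : z (Sh (-P) ω) = f^[n₀] (fun ω' => u (Sh (-P) ω')) ω :=
          (congrFun (h.iter_equi n₀ (Multiplicative.ofAdd (-P)) u) ω).symm
        by_cases hωF : ω ∈ sat (Multiplicative ℤ) F1
        · rw [hzS']
          refine hr' ω hωF v _ fun ω' h2 h3 => ?_
          by_cases h4 : P - e ≤ ht ω'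
          · exact rept_eq1 hht e P hP0 u h4 (by omega)
          · rw [hv, rept_eq0 e P u (by omega) (by omega), huD, huD]
            · intro hh
              have := hd _ hh
              rw [hht] at this
              omega
            · intro hh
              have := hd _ hh
              omega
        · rw [hwF ω hωF, hzF]
          intro hh
          exact hωF ((smul_mem_sat _).1 hh)
      · rw [cut_neg (fun hh => h1 hh.2), hL, cut_neg]
        rw [hht, mem_Iio]
        omega
  have hRm : ∃ T, f^[T] R = fun _ => a₀ := by
    refine mortal_of_approx h hF2 hc1 hRF hRfin ?_
    intro E hE
    obtain ⟨b, hb⟩ := finite_sub_bound ht hE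
    obtain ⟨Y, h1, h2, h3, h4, -⟩ := hY (4 * (d + r' + r + 1 : ℤ) + 1 + 2 * b) (by omega)
    refine ⟨Y, h1, h2, h3, fun e he => h4 e ?_⟩
    have := hb e he
    omega
  have hLm : ∃ T, f^[T] L = fun _ => a₀ := by
    refine mortal_of_approx h hF2 hc1 hLF hLfin ?_
    intro E hE
    obtain ⟨b, hb⟩ := finite_sub_bound ht hE
    set P : ℤ := 4 * (d + r' + r + 1 : ℤ) + 1 + 2 * b with hP
    obtain ⟨Y, h1, ⟨S, hS, h2⟩, ⟨T, h3⟩, -, h4⟩ := hY P (by omega)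
    refine ⟨fun ω => Y (Sh P ω), fun ω hω => h1 _ (by unfold Sh; rwa [smul_mem_sat]),
      ⟨(fun ω => Sh (-P) ω) '' S, hS.image _, fun ω hω => h2 _ fun hh => hω ⟨_, hh, ?_⟩⟩,
      ⟨T, ?_⟩, fun e he => ?_⟩
    · show Sh (-P) (Sh P ω) = ω
      rw [← Sh_add, neg_add_cancel, Sh_zero]
    · have := h.iter_equi T (Multiplicative.ofAdd P) Y
      rw [h3] at this
      exact this
    · have := hb e he
      show Y (Sh P e) = L e
      rw [h4, ← Sh_add, neg_add_cancel, Sh_zero]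
      rw [hht]
      omega
  have hum : ∃ T, f^[T] u = fun _ => a₀ := by
    obtain ⟨T1, hT1⟩ := hRm
    obtain ⟨T2, hT2⟩ := hLm
    have e1 := h.dead hT1 (le_max_left T1 T2)
    have e2 := h.dead hT2 (le_max_right T1 T2)
    rw [hRit] at e1
    rw [hLit] at e2
    refine ⟨max T1 T2 + n₀, ?_⟩
    rw [Function.iterate_add_apply]
    ext ω
    rcases lt_trichotomy (ht ω) 0 with h1 | h1 | h1
    · rw [← cut_pos (a₀ := a₀) (ht := ht) (J := Set.Iio 0) (x := f^[max T1 T2] (f^[n₀] u)) h1]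
      exact congrFun e2 ω
    · exact hzb _ ω (by omega) (by omega)
    · rw [← cut_pos (a₀ := a₀) (ht := ht) (J := Set.Ioi 0) (x := f^[max T1 T2] (f^[n₀] u)) h1]
      exact congrFun e1 ω
  obtain ⟨T, hT⟩ := hum
  obtain ⟨W, hW, hwin⟩ := window h (⊥ : Subgroup (Multiplicative ℤ)) hF1 hF1 hc0 huF hD
    (by rwa [sat_bot]) hT {x | SuppIn a₀ x (sat (Multiplicative ℤ) F0)}
    (fun y hy => hy) (fun y hy _ => glue_supp huF hy) hD
    (fun y hy hyd n hn c hcQ => hblock y hy (fun ω hω => by rw [hyd ω hω, hux ω hω]) n hn c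
      (Or.inl hcQ))
  obtain ⟨K', hK', hcK⟩ := conf_of_window h (⊥ : Subgroup (Multiplicative ℤ)) hF1 hc0 hW hwin
    (hSx.subset (inter_subset_left (t := sat (Multiplicative ℤ) F0))) inter_subset_right
  refine h.fin_mortal hK' (x := x) ?_
  intro n
  have := hcK x ?_ n
  · rwa [sat_bot] at this
  · rw [sat_bot]
    intro ω hω
    by_cases h1 : ω ∈ Sx
    · exact hx ω fun h2 => hω ⟨h1, h2⟩
    · exact hxS ω h1

end Z
end NilCA

namespace NilCA
set_option linter.unusedSectionVars false
set_option linter.style.haveILetI false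
open Set

lemma range_fi {Λ Γ : Type} [Group Λ] [Group Γ] (L : Subgroup Γ) [L.Normal] (φ : Λ →* Γ ⧸ L)
    (K : Subgroup Γ) [K.FiniteIndex] (hK : ∀ k ∈ K, ∃ l, φ l = (k : Γ ⧸ L)) :
    φ.range.FiniteIndex := by
  have h1 : K ≤ φ.range.comap (QuotientGroup.mk' L) := by
    intro k hk
    obtain ⟨l, hl⟩ := hK k hk
    exact ⟨l, hl⟩
  have h2 := Subgroup.finiteIndex_of_le h1
  refine ⟨?_⟩
  rw [← Subgroup.index_comap_of_surjective φ.range (QuotientGroup.mk'_surjective L)]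
  exact h2.index_ne_zero

lemma good2_free (J : Type) [Fintype J] : Good2 (J → Multiplicative ℤ) := by
  classical
  let ev : (i : J) → (J → Multiplicative ℤ) →* Multiplicative ℤ := fun i => Pi.evalMonoidHom _ i
  refine good2_multi (fun i => (ev i).ker) (fun i => inferInstance) ?_ ?_
  · have : (⨅ i, (ev i).ker : Subgroup (J → Multiplicative ℤ)) = ⊥ := by
      rw [eq_bot_iff]
      intro v hv
      rw [Subgroup.mem_iInf] at hv
      rw [Subgroup.mem_bot]
      ext1 i
      exact hv i
    rw [this]
    infer_instance
  · intro i E hE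
    have hb : ∃ m : ℕ, 0 < m ∧ ∀ e ∈ E, ∀ j, (Multiplicative.toAdd (e j)).natAbs < m := by
      have hfin : (⋃ e ∈ E, ⋃ j, {(Multiplicative.toAdd (e j)).natAbs}).Finite :=
        hE.biUnion fun e _ => Set.finite_iUnion fun j => Set.finite_singleton _
      obtain ⟨b, hb⟩ := hfin.bddAbove
      refine ⟨b + 1, by omega, fun e he j => ?_⟩
      have := hb (mem_biUnion he (mem_iUnion.2 ⟨j, rfl⟩))
      omega
    obtain ⟨m, hm, hmE⟩ := hb
    have : NeZero m := ⟨hm.ne'⟩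
    let red : Multiplicative ℤ →* Multiplicative (ZMod m) :=
      AddMonoidHom.toMultiplicative (Int.castAddHom (ZMod m))
    have hred : ∀ k, red k = 1 ↔ (m : ℤ) ∣ Multiplicative.toAdd k := by
      intro k
      rw [← ZMod.intCast_zmod_eq_zero_iff_dvd]
      exact Iff.rfl
    let ψ : (J → Multiplicative ℤ) →* (J → Multiplicative (ZMod m)) :=
      MonoidHom.pi (fun j => red.comp (ev j))
    have hfinZ : Finite (Multiplicative (ZMod m)) := inferInstanceAs (Finite (ZMod m))
    have hKfi : ψ.ker.FiniteIndex := inferInstance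
    refine ⟨ψ.ker ⊓ (ev i).ker, inferInstance, inf_le_right, ?_, ?_⟩
    · rintro e he ⟨h1, -⟩
      ext1 j
      have h2 : red (e j) = 1 := congrFun h1 j
      rw [hred] at h2
      have h3 := hmE e he j
      have h4 : Multiplicative.toAdd (e j) = 0 := Int.eq_zero_of_abs_lt_dvd h2 (by
        rw [Int.abs_eq_natAbs]; exact_mod_cast h3)
      exact h4
    · let sg : Multiplicative ℤ →* (J → Multiplicative ℤ) := MonoidHom.mulSingle (fun _ => Multiplicative ℤ) i
      have hinj : Function.Injective ((QuotientGroup.mk' (ψ.ker ⊓ (ev i).ker)).comp sg) := by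
        rw [injective_iff_map_eq_one]
        intro k hk
        have h1 : sg k ∈ ψ.ker ⊓ (ev i).ker := (QuotientGroup.eq_one_iff _).1 hk
        have h2 : (sg k) i = 1 := h1.2
        simpa [sg] using h2
      have : ((QuotientGroup.mk' (ψ.ker ⊓ (ev i).ker)).comp sg).range.FiniteIndex := by
        refine range_fi _ _ ψ.ker ?_
        intro k hk
        refine ⟨k i, ?_⟩
        refine QuotientGroup.eq.2 ?_
        constructor
        · refine ψ.ker.mul_mem (ψ.ker.inv_mem ?_) hk
          show ψ _ = 1
          ext1 j
          show red (sg (k i) j) = 1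
          have hkj : red (k i) = 1 := congrFun hk i
          by_cases hj : j = i
          · subst hj
            simpa [sg] using hkj
          · simp [sg, hj]
        · show ((sg (k i))⁻¹ * k) i = 1
          simp [sg]
      exact good2_int.hom _ hinj

lemma good2_fg (Γ : Type) [CommGroup Γ] [Group.FG Γ] : Good2 Γ := by
  obtain ⟨ι, J, _, _, p, hp, e, ⟨iso⟩⟩ := CommGroup.equiv_free_prod_prod_multiplicative_zmod Γ
  have : ∀ i, NeZero (p i ^ e i) := fun i => ⟨pow_ne_zero _ (hp i).ne_zero⟩
  have hfinZ : ∀ i, Finite (Multiplicative (ZMod (p i ^ e i))) :=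
    fun i => inferInstanceAs (Finite (ZMod (p i ^ e i)))
  let φ : (J → Multiplicative ℤ) →* Γ := iso.symm.toMonoidHom.comp (MonoidHom.inl _ _)
  have hφ : Function.Injective φ := iso.symm.injective.comp (fun a b h => by simpa using h)
  let χ : Γ →* ((i : ι) → Multiplicative (ZMod (p i ^ e i))) :=
    (MonoidHom.snd _ _).comp iso.toMonoidHom
  have hχ : χ.ker ≤ φ.range := by
    intro γ hγ
    refine ⟨(iso γ).1, ?_⟩
    show iso.symm ((iso γ).1, 1) = γ
    rw [MulEquiv.symm_apply_eq]
    have : (iso γ).2 = 1 := hγ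
    exact Prod.ext rfl this.symm
  have hfi : φ.range.FiniteIndex := Subgroup.finiteIndex_of_le hχ
  exact (good2_free J).hom φ hφ

lemma good2_comm (Γ : Type) [CommGroup Γ] : Good2 Γ :=
  good2_local fun M hM => by
    have : Group.FG M := (Group.fg_iff_subgroup_fg M).2 hM
    exact good2_fg M

lemma good2_comm' (Γ : Type) [G : Group Γ] (h : ∀ a b : Γ, a * b = b * a) : Good2 Γ :=
  @good2_comm Γ { G with mul_comm := h }

lemma rf_sub {Γ : Type} [Group Γ] (h : ResiduallyFinite Γ) (H : Subgroup Γ) :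
    ResiduallyFinite H := by
  intro g hg
  obtain ⟨Q, _, φ, hQ, hφ⟩ := h (g : Γ) (fun hh => hg (Subtype.ext hh))
  exact ⟨Q, _, φ.comp H.subtype, hQ, hφ⟩

lemma rf_avoid {Γ : Type} [Group Γ] (h : ResiduallyFinite Γ) {E : Set Γ} (hE : E.Finite) :
    ∃ N : Subgroup Γ, N.Normal ∧ N.FiniteIndex ∧ ∀ e ∈ E, e ∈ N → e = 1 := by
  induction E, hE using Set.Finite.induction_on with
  | empty => exact ⟨⊤, inferInstance, inferInstance, by simp⟩
  | @insert a S _ _ ih =>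
    obtain ⟨N, hN, hNf, hav⟩ := ih
    by_cases ha : a = 1
    · refine ⟨N, hN, hNf, ?_⟩
      rintro e (rfl | he) heN
      · exact ha
      · exact hav e he heN
    · obtain ⟨Q, _, φ, hQ, hφ⟩ := h a ha
      refine ⟨N ⊓ φ.ker, inferInstance, inferInstance, ?_⟩
      rintro e (rfl | he) heN
      · exact absurd heN.2 hφ
      · exact hav e he heN.1

lemma map_derived {Γ : Type} [Group Γ] (n : ℕ) :
    (derivedSeries (derivedSeries Γ 1) n).map (derivedSeries Γ 1).subtype =
      derivedSeries Γ (n + 1) := by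
  induction n with
  | zero =>
    rw [derivedSeries_zero, ← MonoidHom.range_eq_map, Subgroup.range_subtype]
  | succ n ih =>
    rw [derivedSeries_succ _ n, Subgroup.map_commutator, ih, ← derivedSeries_succ]

open scoped commutatorElement in
lemma goodInf_solvable (n : ℕ) : ∀ (Γ : Type) [Group Γ], ResiduallyFinite Γ →
    derivedSeries Γ n = ⊥ → GoodInf Γ := by
  induction n with
  | zero =>
    intro Γ _ _ h
    refine (good2_comm' Γ ?_).inf
    intro a b
    have h1 : ∀ x : Γ, x = 1 := fun x => by
      have : x ∈ derivedSeries Γ 0 := Subgroup.mem_top x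
      rw [h] at this
      exact this
    rw [h1 a, h1 b]
  | succ n ih =>
    intro Γ _ hRF h
    have hL : GoodInf (derivedSeries Γ 1) := by
      refine ih _ (rf_sub hRF _) ?_
      rw [← map_derived] at h
      exact (Subgroup.map_eq_bot_iff_of_injective _ (Subgroup.subtype_injective _)).1 h
    refine goodInf_ext (derivedSeries Γ 1) hL ?_
    intro E hE
    obtain ⟨N, hN, hNf, hav⟩ := rf_avoid hRF hE
    refine ⟨derivedSeries Γ 1 ⊓ N, inferInstance, inf_le_left, fun e he hh => hav e he hh.2, ?_⟩
    set L' : Subgroup Γ := derivedSeries Γ 1 ⊓ N with hL'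
    set B : Subgroup (Γ ⧸ L') := N.map (QuotientGroup.mk' L') with hB
    have hBg : Good2 B := by
      apply good2_comm'
      rintro ⟨_, a, ha, rfl⟩ ⟨_, b, hb, rfl⟩
      apply Subtype.ext
      show ((a * b : Γ) : Γ ⧸ L') = ((b * a : Γ) : Γ ⧸ L')
      refine QuotientGroup.eq.2 ?_
      constructor
      · have h1 : (a * b)⁻¹ * (b * a) = ⁅b⁻¹, a⁻¹⁆ := by
          rw [commutatorElement_def]; group
        rw [h1, derivedSeries_succ]
        exact Subgroup.commutator_mem_commutator (Subgroup.mem_top _) (Subgroup.mem_top _)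
      · exact N.mul_mem (N.inv_mem (N.mul_mem ha hb)) (N.mul_mem hb ha)
    have hfi : B.subtype.range.FiniteIndex :=
      range_fi L' B.subtype N (fun k hk => ⟨⟨_, k, hk, rfl⟩, rfl⟩)
    exact (hBg.hom B.subtype (Subgroup.subtype_injective _)).inf

lemma goodInf_vs {G : Type} [Group G] (hRF : ResiduallyFinite G) (H : Subgroup G)
    [H.FiniteIndex] (n : ℕ) (hn : derivedSeries H n = ⊥) : GoodInf G := by
  have h1 : GoodInf H := goodInf_solvable n H (rf_sub hRF H) hn
  have : H.subtype.range.FiniteIndex := by rw [Subgroup.range_subtype]; infer_instance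
  exact h1.hom H.subtype (Subgroup.subtype_injective _)

lemma final {G A : Type} [Group G] [Finite A] [TopologicalSpace A] [DiscreteTopology A] {a₀ : A}
    {f : (G → A) → (G → A)} (hs : Sys G a₀ f) (hg : GoodInf G) :
    ∃ n : ℕ, ∀ x : G → A, f^[n] x = fun _ => a₀ := by
  classical
  have hsat : sat G ({1} : Set G) = univ := by
    rw [eq_univ_iff_forall]
    exact fun g => ⟨g, 1, rfl, mul_one g⟩
  have hconf : ∀ F : Set G, Conf G a₀ f F {1} := by
    intro F x _ n ω hω
    rw [hsat] at hω
    exact absurd (mem_univ _) hω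
  have hfin : ∀ x, FinSupp a₀ x → ∃ n, f^[n] x = fun _ => a₀ :=
    hg G A a₀ f hs (fun F _ => ⟨{1}, Set.finite_singleton _, hconf F⟩)
  have hB : ∃ B : Set G, B.Finite ∧ ∀ y, FinSupp a₀ y → (∀ b ∈ B, y b = a₀) →
      ∀ n, f^[n] y 1 = a₀ := by
    by_contra hh
    push Not at hh
    refine no_visits hs (Set.finite_singleton (1 : G)) (Set.finite_singleton (1 : G))
      (hconf {1}) ?_
    intro B hB
    obtain ⟨y, hy, hyB, n, hn⟩ := hh B hB
    refine ⟨y, ?_, hy, hyB, hfin y hy, n, 1, rfl, hn⟩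
    rw [hsat]
    exact fun ω hω => absurd (mem_univ _) hω
  obtain ⟨B, hBf, hB⟩ := hB
  have hB' : ∀ y : G → A, (∀ b ∈ B, y b = a₀) → ∀ n, f^[n] y 1 = a₀ := by
    intro y hy n
    obtain ⟨E, hE, hloc⟩ := exists_loc (fun x => f^[n] x 1)
      ((continuous_apply 1).comp (hs.cont.iterate n))
    have h1 := hloc y (fun ω => if ω ∈ E then y ω else a₀) (fun e he => (if_pos he).symm)
    refine h1.trans (hB _ ⟨E, hE, fun ω hω => if_neg hω⟩ ?_ n)
    intro b hb
    simp only [hy b hb, ite_self]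
  have hopen : ∀ m : ℕ, IsOpen {x : G → A | ∀ b ∈ B, f^[m] x b = a₀} := by
    intro m
    have : {x : G → A | ∀ b ∈ B, f^[m] x b = a₀} = ⋂ b ∈ B, {x : G → A | f^[m] x b = a₀} := by
      ext x; simp
    rw [this]
    refine hBf.isOpen_biInter fun b _ => ?_
    exact (isOpen_discrete ({a₀} : Set A)).preimage
      ((continuous_apply b).comp (hs.cont.iterate m))
  obtain ⟨t, ht⟩ := isCompact_univ.elim_finite_subcover _ hopen (fun x _ => by
    obtain ⟨N, hN⟩ := hs.unif_an x hBf
    exact mem_iUnion.2 ⟨N, hN N le_rfl⟩)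
  have hone : ∀ x : G → A, f^[t.sup id] x 1 = a₀ := by
    intro x
    obtain ⟨m, hm⟩ := mem_iUnion.1 (ht (mem_univ x))
    obtain ⟨hmt, hx⟩ := mem_iUnion.1 hm
    have hle : m ≤ t.sup id := Finset.le_sup (f := id) hmt
    obtain ⟨k, hk⟩ := Nat.exists_eq_add_of_le hle
    rw [hk, add_comm, Function.iterate_add_apply]
    exact hB' _ hx k
  refine ⟨t.sup id, fun x => ?_⟩
  ext g
  have h1 := congrFun (hs.iter_equi (t.sup id) g x) 1
  rw [hone] at h1
  rw [h1]
  show _ = f^[t.sup id] x (g * 1)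
  rw [mul_one]

end NilCA

/-- Let `G` be a residually finite virtually solvable group, `A` a
finite alphabet with a distinguished element `a₀`, and `f` a cellular automaton on
the full shift `A^G` (a continuous shift-commuting map, where the shift is
`(g·x)(h) = x(g⁻¹h)`). If `fⁿ(x) → a₀^G` for every configuration `x`, then `f` is
nilpotent. -/
theorem statement13 {G A : Type} [Group G]
    [Finite A] [TopologicalSpace A] [DiscreteTopology A] (a₀ : A)
    (hRF : ResiduallyFinite G)
    (hVS : ∃ H : Subgroup G, H.FiniteIndex ∧ IsSolvable H)
    (f : (G → A) → (G → A)) (hf : Continuous f)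
    (hfeq : ∀ (g : G) (x : G → A),
      f (fun h => x (g⁻¹ * h)) = fun h => f x (g⁻¹ * h))
    (hAN : ∀ x : G → A,
      Filter.Tendsto (fun n => f^[n] x) Filter.atTop (nhds fun _ => a₀)) :
    ∃ n : ℕ, ∀ x : G → A, f^[n] x = fun _ => a₀ := by
  obtain ⟨H, hHf, hHs⟩ := hVS
  obtain ⟨n, hn⟩ := (Group.isSolvable_def H).1 hHs
  refine NilCA.final (a₀ := a₀) ?_ (NilCA.goodInf_vs hRF H n hn)
  refine ⟨fun γ ω h => ?_, hf, fun γ x => ?_, fun x ω => ?_⟩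
  · exact mul_eq_right.1 h
  · have := hfeq γ⁻¹ x
    rw [inv_inv] at this
    exact this
  · have h1 := (tendsto_pi_nhds.1 (hAN x)) ω
    rw [nhds_discrete, Filter.tendsto_pure] at h1
    exact Filter.eventually_atTop.1 h1
end

section
/- Let (ℤ, X, 0) be an expansive pointed ℤ-dynamical system such that for each homoclinic point x ∈ X and all ε > 0, there exist two points x¹, x² ∈ X such that for each i ∈ {1, 2} and each n ∈ ℤ there exists k ∈ ℤ with d(n·xⁱ, k·x) < ε, and moreover one can choose k = 0 for infinitely many positive n when i = 1, and k = 0 for infinitely many negative n when i = 2. Then every asymptotically nilpotent endomorphism f : X → X of (ℤ, X, 0) is nilpotent. -/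
structure NSys (X : Type) [MetricSpace X] where
  s : ℤ → X → X
  x₀ : X
  f : X → X
  Δ : ℝ
  r : ℤ
  s_cont : ∀ n, Continuous (s n)
  s_zero : ∀ x, s 0 x = x
  s_add : ∀ m n x, s (m + n) x = s m (s n x)
  s_fix : ∀ n, s n x₀ = x₀
  hΔ : 0 < Δ
  hexp : ∀ x y, (∀ n, dist (s n x) (s n y) ≤ Δ) → x = y
  hf : Continuous f
  f0 : f x₀ = x₀
  feq : ∀ n x, f (s n x) = s n (f x)
  hAN : ∀ x, Filter.Tendsto (fun n => f^[n] x) Filter.atTop (nhds x₀)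
  hr : 0 ≤ r
  hE : ∀ y, (∀ j : ℤ, -r ≤ j → j ≤ r → dist (s j y) x₀ ≤ Δ) →
    dist y x₀ ≤ Δ / 2 ∧ dist (f y) x₀ ≤ Δ / 2

theorem nested_nonempty {X : Type*} [TopologicalSpace X] [CompactSpace X] (C : ℕ → Set X)
    (hanti : ∀ n, C (n + 1) ⊆ C n) (hcl : ∀ n, IsClosed (C n)) (hne : ∀ n, (C n).Nonempty) :
    ∃ x, ∀ n, x ∈ C n := by
  obtain ⟨x, hx⟩ := IsCompact.nonempty_iInter_of_sequence_nonempty_isCompact_isClosed C hanti hne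
    (hcl 0).isCompact hcl
  exact ⟨x, fun n => Set.mem_iInter.1 hx n⟩

/-- Uniform expansivity at the fixed point. -/
theorem unif_exp {X : Type} [MetricSpace X] [CompactSpace X] (s : ℤ → X → X) (x₀ : X) (Δ : ℝ)
    (s_cont : ∀ n, Continuous (s n)) (s_fix : ∀ n, s n x₀ = x₀)
    (hexp : ∀ x y, (∀ n, dist (s n x) (s n y) ≤ Δ) → x = y) (ε : ℝ) (hε : 0 < ε) :
    ∃ N : ℕ, ∀ x, (∀ j : ℤ, -(N : ℤ) ≤ j → j ≤ N → dist (s j x) x₀ ≤ Δ) → dist x x₀ < ε := by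
  by_contra! hcon
  obtain ⟨x, hx⟩ := nested_nonempty
    (fun N : ℕ => {x | (∀ j : ℤ, -(N : ℤ) ≤ j → j ≤ N → dist (s j x) x₀ ≤ Δ) ∧ ε ≤ dist x x₀})
    (by
      rintro n x ⟨h1, h2⟩
      exact ⟨fun j ha hb => h1 j (by push_cast; omega) (by push_cast; omega), h2⟩)
    (by
      intro n
      refine IsClosed.inter ?_ (isClosed_le continuous_const (continuous_id.dist continuous_const))
      have h0 : IsClosed {x | ∀ j : ℤ, -(n : ℤ) ≤ j → j ≤ n → dist (s j x) x₀ ≤ Δ} := by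
        simp only [Set.ofPred_forall]
        refine isClosed_iInter fun j => isClosed_iInter fun _ => isClosed_iInter fun _ => ?_
        exact isClosed_le ((s_cont j).dist continuous_const) continuous_const
      exact h0)
    (fun n => hcon n)
  have : x = x₀ := by
    apply hexp
    intro n
    rw [s_fix]
    exact (hx n.natAbs).1 n (by omega) (by omega)
  have h2 := (hx 0).2
  rw [this, dist_self] at h2
  linarith

namespace NSys

variable {X : Type} [MetricSpace X] (S : NSys X)

def Q (y : X) (n : ℤ) : Prop := dist (S.s n y) S.x₀ < S.Δ

def Wall (y : X) (a : ℤ) : Prop :=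
  ∀ m : ℕ, ∀ j : ℤ, a - S.r ≤ j → j ≤ a + S.r → dist (S.s j (S.f^[m] y)) S.x₀ ≤ S.Δ / 2

def mirror : NSys X where
  s n := S.s (-n)
  x₀ := S.x₀
  f := S.f
  Δ := S.Δ
  r := S.r
  s_cont n := S.s_cont _
  s_zero x := by simpa using S.s_zero x
  s_add m n x := by rw [neg_add, S.s_add]
  s_fix n := S.s_fix _
  hΔ := S.hΔ
  hexp x y h := S.hexp x y fun n => by simpa using h (-n)
  hf := S.hf
  f0 := S.f0
  feq n x := S.feq _ x
  hAN := S.hAN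
  hr := S.hr
  hE y h := S.hE y fun j h1 h2 => by simpa using h (-j) (by omega) (by omega)

theorem mirror_Q (y : X) (n : ℤ) : S.mirror.Q y n ↔ S.Q y (-n) := Iff.rfl

theorem mirror_Wall (y : X) (a : ℤ) : S.mirror.Wall y a ↔ S.Wall y (-a) := by
  constructor
  · intro h m j h1 h2
    have := h m (-j) (by change _ - S.r ≤ _; omega) (by change _ ≤ _ + S.r; omega)
    simpa [mirror] using this
  · intro h m j h1 h2
    exact h m (-j) (by change _ - S.r ≤ _ at h1; change _ ≤ _ + S.r at h2; omega)
      (by change _ - S.r ≤ _ at h1; change _ ≤ _ + S.r at h2; omega)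

theorem half_lt {t : ℝ} (h : t ≤ S.Δ / 2) : t < S.Δ := by
  have := S.hΔ
  linarith

theorem iter_cont (m : ℕ) : Continuous (S.f^[m]) := S.hf.iterate m

theorem iter_eq (m : ℕ) (n : ℤ) (x : X) : S.f^[m] (S.s n x) = S.s n (S.f^[m] x) := by
  induction m with
  | zero => rfl
  | succ m ih => rw [Function.iterate_succ_apply', ih, S.feq, Function.iterate_succ_apply']

theorem iter_fix (m : ℕ) : S.f^[m] S.x₀ = S.x₀ := by
  induction m with
  | zero => rfl
  | succ m ih => rw [Function.iterate_succ_apply', ih, S.f0]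

theorem spread {y : X} {n : ℤ}
    (h : ∀ k, n - S.r ≤ k → k ≤ n + S.r → dist (S.s k y) S.x₀ ≤ S.Δ) :
    dist (S.s n y) S.x₀ ≤ S.Δ / 2 ∧ S.Q (S.f y) n := by
  have := S.hE (S.s n y) (fun j h1 h2 => by
    rw [← S.s_add]; exact h _ (by omega) (by omega))
  refine ⟨this.1, ?_⟩
  rw [S.feq] at this
  exact S.half_lt this.2

theorem spreadQ {y : X} {n : ℤ} (h : ∀ k, n - S.r ≤ k → k ≤ n + S.r → S.Q y k) :
    S.Q (S.f y) n := (S.spread fun k h1 h2 => (h k h1 h2).le).2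

/-- iterated spread -/
theorem spread_iter {y : X} {a b : ℤ} (h : ∀ k, a ≤ k → k ≤ b → S.Q y k) (m : ℕ) :
    ∀ k, a + S.r * m ≤ k → k ≤ b - S.r * m → S.Q (S.f^[m] y) k := by
  induction m with
  | zero => intro k h1 h2; exact h k (by simpa using h1) (by simpa using h2)
  | succ m ih =>
    intro k h1 h2
    rw [Function.iterate_succ_apply']
    push_cast at h1 h2
    refine S.spreadQ fun j h3 h4 => ih j (by linarith) (by linarith)

theorem wallQ {y : X} {a : ℤ} (h : S.Wall y a) (m : ℕ) {j : ℤ} (h1 : a - S.r ≤ j)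
    (h2 : j ≤ a + S.r) : S.Q (S.f^[m] y) j := S.half_lt (h m j h1 h2)

theorem wall_iter {y : X} {a : ℤ} (h : S.Wall y a) (m : ℕ) : S.Wall (S.f^[m] y) a := by
  intro k j h1 h2
  rw [← Function.iterate_add_apply]
  exact h _ j h1 h2

theorem wall_shift {y : X} {a k : ℤ} : S.Wall (S.s k y) a ↔ S.Wall y (a + k) := by
  constructor
  · intro h m j h1 h2
    have := h m (j - k) (by omega) (by omega)
    rw [S.iter_eq, ← S.s_add] at this
    simpa using this
  · intro h m j h1 h2
    rw [S.iter_eq, ← S.s_add]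
    exact h m (j + k) (by omega) (by omega)

theorem isClosed_dist (k : ℤ) (m : ℕ) (c : ℝ) :
    IsClosed {y | dist (S.s k (S.f^[m] y)) S.x₀ ≤ c} :=
  isClosed_le (((S.s_cont k).comp (S.iter_cont m)).dist continuous_const) continuous_const

theorem isOpen_Q (k : ℤ) (m : ℕ) : IsOpen {y | S.Q (S.f^[m] y) k} :=
  isOpen_lt (((S.s_cont k).comp (S.iter_cont m)).dist continuous_const) continuous_const

theorem isClosed_wall (a : ℤ) : IsClosed {y | S.Wall y a} := by
  simp only [Wall, Set.ofPred_forall]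
  exact isClosed_iInter fun m => isClosed_iInter fun j => isClosed_iInter fun _ =>
    isClosed_iInter fun _ => S.isClosed_dist _ _ _

theorem eq_of_Q {y : X} (h : ∀ n, S.Q y n) : y = S.x₀ := by
  apply S.hexp
  intro n
  rw [S.s_fix]
  exact (h n).le

theorem quiet_eventually (y : X) (a b : ℤ) :
    ∀ᶠ m in Filter.atTop, ∀ k, a ≤ k → k ≤ b → S.Q (S.f^[m] y) k := by
  have : ∀ k ∈ Finset.Icc a b, ∀ᶠ m in Filter.atTop, S.Q (S.f^[m] y) k := by
    intro k _
    have h1 := ((S.s_cont k).tendsto S.x₀).comp (S.hAN y)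
    rw [S.s_fix] at h1
    exact (Metric.tendsto_nhds.1 h1) S.Δ S.hΔ
  have := (Filter.eventually_all_finset _).2 this
  filter_upwards [this] with m hm k h1 h2 using hm k (Finset.mem_Icc.2 ⟨h1, h2⟩)

/-- segment confined between walls stays quiet. -/
theorem confined_step {y : X} {a b : ℤ} (ha : S.Wall y a) (hb : S.Wall y b)
    {m m' : ℕ} (hm : m ≤ m') (hq : ∀ k, a ≤ k → k ≤ b → S.Q (S.f^[m] y) k) :
    ∀ k, a ≤ k → k ≤ b → S.Q (S.f^[m'] y) k := by
  induction m', hm using Nat.le_induction with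
  | base => exact hq
  | succ n _ ih =>
    intro k h1 h2
    rw [Function.iterate_succ_apply']
    refine S.spreadQ fun j h3 h4 => ?_
    by_cases h5 : j < a
    · exact S.wallQ ha n (by omega) (by have := S.hr; omega)
    · by_cases h6 : b < j
      · exact S.wallQ hb n (by have := S.hr; omega) (by omega)
      · exact ih j (by omega) (by omega)

theorem trapped [CompactSpace X] (L : ℕ) : ∃ T : ℕ, ∀ (y : X) (a b : ℤ), S.Wall y a → S.Wall y b →
    b ≤ a + L → ∀ m, T ≤ m → ∀ k, a ≤ k → k ≤ b → S.Q (S.f^[m] y) k := by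
  have key : ∀ l : ℕ, ∃ T : ℕ, ∀ y, S.Wall y 0 → S.Wall y l →
      ∀ m, T ≤ m → ∀ k : ℤ, 0 ≤ k → k ≤ l → S.Q (S.f^[m] y) k := by
    intro l
    by_contra! hcon
    obtain ⟨y, hy⟩ := nested_nonempty
      (fun T : ℕ => {y | S.Wall y 0 ∧ S.Wall y l} ∩
        {y | ∀ k ∈ Set.Icc (0 : ℤ) l, S.Q (S.f^[T] y) k}ᶜ)
      (by
        rintro T y ⟨⟨h1, h2⟩, h3⟩
        refine ⟨⟨h1, h2⟩, fun h4 => h3 fun k hk => ?_⟩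
        exact S.confined_step h1 h2 (Nat.le_succ T) (fun k h5 h6 => h4 k ⟨h5, h6⟩) k hk.1 hk.2)
      (by
        intro T
        refine ((S.isClosed_wall 0).inter (S.isClosed_wall l)).inter ?_
        rw [isClosed_compl_iff]
        simp only [Set.ofPred_forall]
        exact (Set.finite_Icc (0 : ℤ) l).isOpen_biInter fun k _ => S.isOpen_Q k T)
      (by
        intro T
        obtain ⟨y, h1, h2, m, hm, k, h3, h4, h5⟩ := hcon T
        exact ⟨y, ⟨h1, h2⟩, fun h6 => h5 (S.confined_step h1 h2 hm
          (fun k h5 h6' => h6 k ⟨h5, h6'⟩) k h3 h4)⟩)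
    obtain ⟨T, hT⟩ := (S.quiet_eventually y 0 l).exists
    exact (hy T).2 fun k hk => hT k hk.1 hk.2
  choose T hT using key
  refine ⟨(Finset.range (L + 1)).sup T, fun y a b ha hb hab m hm k h1 h2 => ?_⟩
  have h3 := hT (b - a).toNat (S.s a y) (S.wall_shift.2 (by simpa using ha))
    (S.wall_shift.2 (by rw [Int.toNat_of_nonneg (by omega)]; simpa using hb)) m
    (le_trans (Finset.le_sup (f := T) (Finset.mem_range.2 (by omega))) hm) (k - a)
    (by omega) (by omega)
  unfold Q at h3 ⊢
  rw [S.iter_eq, ← S.s_add] at h3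
  simpa using h3

end NSys

namespace NSys

variable {X : Type} [MetricSpace X] (S : NSys X)

def Glider : Prop := ∃ (z : X) (n : ℕ) (k : ℤ), z ≠ S.x₀ ∧ 0 < n ∧ S.f^[n] z = S.s k z ∧
  ∃ a b : ℤ, ∀ j, (j < a ∨ b < j) → dist (S.s j z) S.x₀ ≤ S.Δ

theorem mirror_Glider (h : S.mirror.Glider) : S.Glider := by
  obtain ⟨z, n, k, h1, h2, h3, a, b, h4⟩ := h
  refine ⟨z, n, -k, h1, h2, h3, -b, -a, fun j hj => ?_⟩
  have := h4 (-j) (by omega)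
  simpa [mirror] using this

def Pset (L : ℤ) : Set X := {x | ∀ j : ℤ, (j < -L ∨ 0 < j) → dist (S.s j x) S.x₀ ≤ S.Δ}

theorem Pset_finite [CompactSpace X] (L : ℤ) : (S.Pset L).Finite := by
  have hcl : IsClosed (S.Pset L) := by
    simp only [Pset, Set.ofPred_forall]
    exact isClosed_iInter fun j => isClosed_iInter fun _ => S.isClosed_dist j 0 _
  refine hcl.isCompact.finite ?_
  rw [isDiscrete_iff_forall_mem_exists_isOpen]
  intro x hx
  refine ⟨⋂ k ∈ Set.Icc (-L - S.r) S.r, {u | dist (S.s k u) (S.s k x) < S.Δ}, ?_, ?_⟩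
  · exact (Set.finite_Icc (-L - S.r) S.r).isOpen_biInter fun k _ =>
      isOpen_lt ((S.s_cont k).dist continuous_const) continuous_const
  · ext u
    simp only [Set.mem_inter_iff, Set.mem_iInter, Set.mem_singleton_iff]
    constructor
    · rintro ⟨h1, h2⟩
      apply S.hexp
      intro n
      by_cases hn : n ∈ Set.Icc (-L - S.r) S.r
      · exact (h1 n hn).le
      · have hn' : n < -L - S.r ∨ S.r < n := by
          by_contra hh
          exact hn ⟨by omega, by omega⟩
        have hr := S.hr
        have e1 := (S.spread (y := u) (n := n) fun k _ _ => h2 k (by omega)).1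
        have e2 := (S.spread (y := x) (n := n) fun k _ _ => hx k (by omega)).1
        have := dist_triangle_right (S.s n u) (S.s n x) S.x₀
        linarith
    · rintro rfl
      refine ⟨fun k _ => ?_, hx⟩
      change dist _ _ < _
      rw [dist_self]
      exact S.hΔ

theorem exists_max_int (p : ℤ → Prop) (b : ℤ) (hb : ∀ k, p k → k ≤ b) (he : ∃ k, p k) :
    ∃ q, p q ∧ ∀ k, p k → k ≤ q := by
  obtain ⟨q, h1, h2⟩ := Int.exists_greatest_of_bdd ⟨b, hb⟩ he
  exact ⟨q, h1, h2⟩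

theorem glider_of_right [CompactSpace X] (Y : Set X) (R : ℤ) (hR : 0 ≤ R)
    (hYf : ∀ y ∈ Y, S.f y ∈ Y) (hYs : ∀ k, ∀ y ∈ Y, S.s k y ∈ Y)
    (hW : ∀ y ∈ Y, ¬ S.Q y 0 → ∃ a, -R ≤ a ∧ a ≤ R ∧ S.Wall y a)
    (y : X) (hy : y ∈ Y) (hw : S.Wall y 0) (hq : ∀ k, R < k → dist (S.s k y) S.x₀ ≤ S.Δ)
    (hal : ∀ m : ℕ, ∃ k, 0 < k ∧ ¬ S.Q (S.f^[m] y) k) : S.Glider := by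
  have hr := S.hr
  have hYm : ∀ m : ℕ, S.f^[m] y ∈ Y := by
    intro m
    induction m with
    | zero => exact hy
    | succ m ih => rw [Function.iterate_succ_apply']; exact hYf _ ih
  have hq1 : ∀ k, R + S.r < k → S.Q y k := fun k hk =>
    S.half_lt (S.spread fun j h1 h2 => hq j (by omega)).1
  have hqm : ∀ m : ℕ, ∀ k, R + S.r + S.r * m < k → S.Q (S.f^[m] y) k := by
    intro m k hk
    refine S.spread_iter (a := R + S.r + 1) (b := k + S.r * m) (fun j h1 _ => hq1 j (by omega)) m k
      (by linarith) (by linarith)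
  have hex : ∀ m : ℕ, ∃ q, (0 < q ∧ ¬ S.Q (S.f^[m] y) q) ∧
      ∀ k, (0 < k ∧ ¬ S.Q (S.f^[m] y) k) → k ≤ q := by
    intro m
    refine exists_max_int _ (R + S.r + S.r * m) (fun k hk => ?_) (hal m)
    by_contra hlt
    exact hk.2 (hqm m k (by omega))
  choose q hq2 hq3 using hex
  have hqpos : ∀ m, 0 < q m := fun m => (hq2 m).1
  have hqal : ∀ m, ¬ S.Q (S.f^[m] y) (q m) := fun m => (hq2 m).2
  have hqmax : ∀ m k, q m < k → S.Q (S.f^[m] y) k := by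
    intro m k hk
    by_contra hh
    have := hq3 m k ⟨by have := hqpos m; omega, hh⟩
    omega
  have hq0 : q 0 ≤ R + S.r := by
    by_contra hh
    exact hqal 0 (hq1 _ (by omega))
  have hqs : ∀ m, q (m + 1) ≤ q m + S.r := by
    intro m
    by_contra hh
    refine hqal (m + 1) ?_
    rw [Function.iterate_succ_apply']
    exact S.spreadQ fun j h1 h2 => hqmax m j (by omega)
  have hqst : ∀ m t : ℕ, q (m + t) ≤ q m + S.r * t := by
    intro m t
    induction t with
    | zero => simp
    | succ t ih => have := hqs (m + t); push_cast; rw [← add_assoc]; linarith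
  -- walls near q
  have hwa : ∀ m : ℕ, ∃ a, q m - R ≤ a ∧ a ≤ q m + R ∧ S.Wall (S.f^[m] y) a := by
    intro m
    obtain ⟨a, h1, h2, h3⟩ := hW (S.s (q m) (S.f^[m] y)) (hYs _ _ (hYm m)) (by
      unfold Q; rw [S.s_zero]; exact hqal m)
    exact ⟨a + q m, by omega, by omega, S.wall_shift.1 h3⟩
  choose a ha1 ha2 ha3 using hwa
  let β : ℕ → ℤ := fun m => Nat.rec 0 (fun i b => max b (a i)) m
  have β0 : β 0 = 0 := rfl
  have βs : ∀ m, β (m + 1) = max (β m) (a m) := fun m => rfl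
  have βmono : Monotone β := monotone_nat_of_le_succ fun m => by rw [βs]; exact le_max_left _ _
  have βq : ∀ m, q m - R ≤ β (m + 1) := fun m => by
    rw [βs]; exact (ha1 m).trans (le_max_right _ _)
  have βinc : ∀ m, β (m + 1) ≤ β m + (2 * R + S.r) := by
    intro m
    rw [βs]
    refine max_le (by omega) ?_
    cases m with
    | zero => rw [β0]; have := ha2 0; omega
    | succ m => have := ha2 (m + 1); have := βq m; have := hqs m; omega
  have βwall : ∀ m, S.Wall (S.f^[m] y) (β m) ∧ S.Wall (S.f^[m] y) (β (m + 1)) := by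
    intro m
    have step : S.Wall (S.f^[m] y) (β m) → S.Wall (S.f^[m] y) (β (m + 1)) := by
      intro h
      rw [βs]
      rcases max_choice (β m) (a m) with h' | h' <;> rw [h']
      · exact h
      · exact ha3 m
    suffices h : S.Wall (S.f^[m] y) (β m) from ⟨h, step h⟩
    clear step
    induction m with
    | zero => exact hw
    | succ m ih =>
      have h2 : S.Wall (S.f^[m] y) (β (m + 1)) := by
        rw [βs]
        rcases max_choice (β m) (a m) with h' | h' <;> rw [h']
        · exact ih
        · exact ha3 m
      have := S.wall_iter h2 1
      rwa [← Function.iterate_add_apply, add_comm] at this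
  obtain ⟨T, hT⟩ := S.trapped (2 * R + S.r).toNat
  have hdead : ∀ m s : ℕ, m + T ≤ s → ∀ k, 0 ≤ k → k ≤ β (m + 1) → S.Q (S.f^[s] y) k := by
    intro m
    have one : ∀ m s : ℕ, m + T ≤ s → ∀ k, β m ≤ k → k ≤ β (m + 1) → S.Q (S.f^[s] y) k := by
      intro m s hs k h1 h2
      have := hT (S.f^[m] y) (β m) (β (m + 1)) (βwall m).1 (βwall m).2
        (by rw [Int.toNat_of_nonneg (by omega)]; exact βinc m) (s - m) (by omega) k h1 h2
      rwa [← Function.iterate_add_apply, Nat.sub_add_cancel (by omega)] at this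
    induction m with
    | zero => intro s hs k h1 h2; exact one 0 s hs k (by rw [β0]; exact h1) h2
    | succ m ih =>
      intro s hs k h1 h2
      by_cases h3 : k ≤ β (m + 1)
      · exact ih s (by omega) k h1 h3
      · exact one (m + 1) s hs k (by omega) h2
  set L : ℤ := R + S.r * T with hL
  have hL0 : 0 ≤ L := by positivity
  have hquiet : ∀ m t : ℕ, ∀ k, 0 ≤ k → k < q (m + T) - L → S.Q (S.f^[m + T + t] y) k := by
    intro m t k h1 h2
    refine hdead m _ (by omega) k h1 ?_
    have := βq m
    have := hqst m T
    linarith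
  have hlow : ∀ m, q (m + T) - L ≤ q (m + T + 1) := by
    intro m
    by_contra hh
    exact hqal _ (hquiet m 1 _ (hqpos _).le (by omega))
  have hqinf : ∀ K : ℤ, ∀ᶠ m in Filter.atTop, K < q m := by
    intro K
    filter_upwards [S.quiet_eventually y 0 K] with m hm
    by_contra hh
    exact hqal m (hm _ (hqpos m).le (by omega))
  let x : ℕ → X := fun m => S.s (q m) (S.f^[m] y)
  have hxs : ∀ m, x (m + 1) = S.s (q (m + 1) - q m) (S.f (x m)) := by
    intro m
    change S.s _ (S.f^[m + 1] y) = S.s _ (S.f (S.s _ _))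
    rw [S.feq, ← S.s_add, Function.iterate_succ_apply', sub_add_cancel]
  let Ω : Set X := {z | MapClusterPt z Filter.atTop x}
  have clos : ∀ z ∈ Ω, ∀ F : Set X, IsClosed F → (∀ᶠ m in Filter.atTop, x m ∈ F) → z ∈ F := by
    intro z hz F hF hev
    by_contra hzF
    have := (mapClusterPt_iff_frequently.1 hz) Fᶜ (hF.isOpen_compl.mem_nhds hzF)
    exact this (hev.mono fun m hm => not_not.2 hm)
  have hΩP : Ω ⊆ S.Pset L := by
    intro z hz j hj
    refine clos z hz _ (S.isClosed_dist j 0 S.Δ) ?_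
    filter_upwards [hqinf (-j), Filter.eventually_ge_atTop T] with m hm hmT
    change dist (S.s j (S.s (q m) (S.f^[m] y))) S.x₀ ≤ S.Δ
    rw [← S.s_add]
    apply le_of_lt
    rcases hj with hj | hj
    · obtain ⟨i, rfl⟩ := Nat.exists_eq_add_of_le' hmT
      exact hquiet i 0 _ (by omega) (by omega)
    · exact hqmax m _ (by omega)
  have hΩne : ∀ z ∈ Ω, z ≠ S.x₀ := by
    rintro z hz rfl
    have := clos _ hz {z | S.Q z 0}ᶜ (S.isOpen_Q 0 0).isClosed_compl
      (Filter.Eventually.of_forall fun m => by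
        change ¬ S.Q _ _
        unfold Q
        rw [S.s_zero]
        exact hqal m)
    apply this
    change dist _ _ < _
    rw [S.s_fix, dist_self]
    exact S.hΔ
  obtain ⟨z0, hz0⟩ : Ω.Nonempty := by
    obtain ⟨z, hz⟩ := exists_clusterPt_of_compactSpace (Filter.map x Filter.atTop)
    exact ⟨z, hz⟩
  have hstep : ∀ z : Ω, ∃ j, S.s j (S.f z) ∈ Ω := by
    rintro ⟨z, hz⟩
    by_contra! hcon
    have hV : ∀ j, ∃ V ∈ nhds (S.s j (S.f z)), ∀ᶠ m in Filter.atTop, x m ∉ V := by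
      intro j
      have := hcon j
      change ¬ MapClusterPt _ _ _ at this
      rw [mapClusterPt_iff_frequently] at this
      push Not at this
      simpa using this
    choose V hV1 hV2 using hV
    have hfin := Set.finite_Icc (-L) S.r
    have hn : (⋂ j ∈ Set.Icc (-L) S.r, (fun u => S.s j (S.f u)) ⁻¹' V j) ∈ nhds z := by
      rw [Filter.biInter_mem hfin]
      intro j _
      exact ((S.s_cont j).comp S.hf).continuousAt (hV1 j)
    have hfr := mapClusterPt_iff_frequently.1 hz _ hn
    have hev : ∀ᶠ m in Filter.atTop, ∀ j ∈ Set.Icc (-L) S.r, x (m + 1) ∉ V j := by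
      rw [Filter.eventually_all_finite hfin]
      intro j _
      exact (Filter.tendsto_add_atTop_nat 1).eventually (hV2 j)
    obtain ⟨m, hm, hm2, hmT⟩ := (hfr.and_eventually (hev.and (Filter.eventually_ge_atTop T))).exists
    obtain ⟨i, rfl⟩ := Nat.exists_eq_add_of_le' hmT
    have hmem : q (i + T + 1) - q (i + T) ∈ Set.Icc (-L) S.r := by
      constructor
      · have := hlow i; omega
      · have := hqs (i + T); omega
    apply hm2 _ hmem
    rw [hxs]
    exact Set.mem_iInter₂.1 hm _ hmem
  choose jj hjj using hstep
  let φ : Ω → Ω := fun z => ⟨_, hjj z⟩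
  have hφ : ∀ (n : ℕ) (z : Ω), ∃ k, ((φ^[n] z : Ω) : X) = S.s k (S.f^[n] z) := by
    intro n z
    induction n with
    | zero => exact ⟨0, by simp [S.s_zero]⟩
    | succ n ih =>
      obtain ⟨k, hk⟩ := ih
      refine ⟨jj (φ^[n] z) + k, ?_⟩
      rw [Function.iterate_succ_apply', Function.iterate_succ_apply', S.s_add, ← S.feq, ← hk]
  have : Finite Ω := ((S.Pset_finite L).subset hΩP).to_subtype
  obtain ⟨n1, n2, hne, heq⟩ := Finite.exists_ne_map_eq_of_infinite (fun n : ℕ => φ^[n] ⟨z0, hz0⟩)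
  have main : ∀ n1 n2 : ℕ, n1 < n2 → φ^[n1] ⟨z0, hz0⟩ = φ^[n2] ⟨z0, hz0⟩ → S.Glider := by
    intro n1 n2 hlt heq
    set w := φ^[n1] ⟨z0, hz0⟩ with hwdef
    have h1 : φ^[n2 - n1] w = w := by
      rw [hwdef, ← Function.iterate_add_apply, Nat.sub_add_cancel hlt.le, ← heq]
    obtain ⟨k, hk⟩ := hφ (n2 - n1) w
    rw [h1] at hk
    refine ⟨w, n2 - n1, -k, hΩne _ w.2, by omega, ?_, -L, 0, hΩP w.2⟩
    have h5 := congrArg (S.s (-k)) hk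
    rw [← S.s_add, neg_add_cancel, S.s_zero] at h5
    exact h5.symm
  rcases lt_or_gt_of_ne hne with h | h
  · exact main _ _ h heq
  · exact main _ _ h heq.symm

end NSys

namespace NSys

variable {X : Type} [MetricSpace X] (S : NSys X)

structure GoodY (Y : Set X) (R : ℤ) : Prop where
  hR : 0 ≤ R
  cl : IsClosed Y
  hYf : ∀ y ∈ Y, S.f y ∈ Y
  hYs : ∀ k, ∀ y ∈ Y, S.s k y ∈ Y
  hW : ∀ y ∈ Y, ¬ S.Q y 0 → ∃ a, -R ≤ a ∧ a ≤ R ∧ S.Wall y a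

theorem GoodY.mirror {S : NSys X} {Y : Set X} {R : ℤ} (h : S.GoodY Y R) : S.mirror.GoodY Y R where
  hR := h.hR
  cl := h.cl
  hYf := h.hYf
  hYs k := h.hYs (-k)
  hW y hy hq := by
    obtain ⟨a, h1, h2, h3⟩ := h.hW y hy (by simpa [mirror_Q] using hq)
    exact ⟨-a, by omega, by omega, by rw [mirror_Wall]; simpa using h3⟩

theorem GoodY.wallAt {S : NSys X} {Y : Set X} {R : ℤ} (h : S.GoodY Y R) {y : X} (hy : y ∈ Y) {c : ℤ}
    (hc : ¬ S.Q y c) : ∃ a, c - R ≤ a ∧ a ≤ c + R ∧ S.Wall y a := by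
  obtain ⟨a, h1, h2, h3⟩ := h.hW (S.s c y) (h.hYs _ _ hy) (by
      unfold Q; rw [S.s_zero]; exact hc)
  exact ⟨a + c, by omega, by omega, S.wall_shift.1 h3⟩

theorem right_clean [CompactSpace X] {Y : Set X} {R : ℤ} (hY : S.GoodY Y R) (hG : ¬ S.Glider) :
    ∃ N₀ : ℕ, ∀ N : ℕ, N₀ ≤ N → ∀ y ∈ Y, ∀ A E : ℤ, S.Wall y A → (N : ℤ) ≤ E →
      (∀ k, A + R < k → k ≤ A + R + E → S.Q y k) →
      ∀ k, A ≤ k → k ≤ A + R + E - S.r * N → S.Q (S.f^[N] y) k := by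
  have hr := S.hr
  have hR := hY.hR
  have key : ∃ N₀ : ℕ, ∀ y ∈ Y, S.Wall y 0 → (∀ k : ℤ, R < k → k ≤ R + N₀ → S.Q y k) →
      ∃ m ≤ N₀, ∀ k, 1 ≤ k → k ≤ R + S.r * (m + 1) → S.Q (S.f^[m] y) k := by
    by_contra! hcon
    apply hG
    obtain ⟨y, hy⟩ := nested_nonempty
      (fun N : ℕ => (Y ∩ {y | S.Wall y 0}) ∩
        ({y | ∀ k ∈ Set.Icc (R + 1) (R + N), dist (S.s k y) S.x₀ ≤ S.Δ} ∩
        {y | ∀ m ≤ N, y ∈ {y | ∀ k ∈ Set.Icc (1 : ℤ) (R + S.r * (m + 1)), S.Q (S.f^[m] y) k}ᶜ}))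
      (by
        rintro n y ⟨h1, h2, h3⟩
        refine ⟨h1, fun k hk => h2 k ⟨hk.1, by push_cast; linarith [hk.2]⟩, fun m hm => h3 m (by omega)⟩)
      (by
        intro n
        refine (hY.cl.inter (S.isClosed_wall 0)).inter (IsClosed.inter ?_ ?_)
        · simp only [Set.ofPred_forall]
          exact isClosed_iInter fun k => isClosed_iInter fun _ => S.isClosed_dist k 0 _
        · simp only [Set.ofPred_forall]
          refine isClosed_iInter fun m => isClosed_iInter fun _ => ?_
          refine IsOpen.isClosed_compl ?_
          exact (Set.finite_Icc (1 : ℤ) _).isOpen_biInter fun k _ => S.isOpen_Q k m)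
      (by
        intro n
        obtain ⟨y, h1, h2, h3, h4⟩ := hcon n
        refine ⟨y, ⟨h1, h2⟩, fun k hk => (h3 k (by linarith [hk.1]) hk.2).le, fun m hm hh => ?_⟩
        obtain ⟨k, h5, h6, h7⟩ := h4 m hm
        exact h7 (hh k ⟨h5, h6⟩))
    refine S.glider_of_right Y R hR hY.hYf hY.hYs hY.hW y (hy 0).1.1 (hy 0).1.2 ?_ ?_
    · intro k hk
      exact (hy (k - R).toNat).2.1 k ⟨by omega, by omega⟩
    · intro m
      have := (hy m).2.2 m le_rfl
      by_contra! hh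
      exact this fun k hk => hh k (by linarith [hk.1])
  obtain ⟨N₀, hN⟩ := key
  refine ⟨N₀, fun N hNN y hy A E hA hE hq => ?_⟩
  have shiftQ : ∀ (m : ℕ) (k : ℤ), S.Q (S.f^[m] (S.s A y)) k ↔ S.Q (S.f^[m] y) (k + A) := by
    intro m k
    unfold Q
    rw [S.iter_eq, S.s_add]
  obtain ⟨m, hm, hm2⟩ := hN (S.s A y) (hY.hYs _ _ hy) (S.wall_shift.2 (by simpa using hA))
    (fun k h1 h2 => (shiftQ 0 k).2 (hq _ (by omega) (by omega)))
  have hm3 : ∀ k, A ≤ k → k ≤ A + R + E - S.r * m → S.Q (S.f^[m] y) k := by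
    intro k h1 h2
    by_cases h3 : k = A
    · subst h3
      exact S.wallQ hA m (by omega) (by omega)
    · by_cases h4 : k - A ≤ R + S.r * (m + 1)
      · have := (shiftQ m (k - A)).1 (hm2 (k - A) (by omega) h4)
        simpa using this
      · refine S.spread_iter (a := A + R + 1) (b := A + R + E)
          (fun j h5 h6 => hq j (by omega) h6) m k ?_ (by linarith)
        have : S.r * (m + 1 : ℤ) = S.r * m + S.r := by ring
        linarith
  have hmN : m ≤ N := hm.trans hNN
  clear hNN
  induction N, hmN using Nat.le_induction with
  | base => exact hm3
  | succ n _ ih =>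
    intro k h1 h2
    rw [Function.iterate_succ_apply']
    refine S.spreadQ fun j h3 h4 => ?_
    by_cases h5 : j < A
    · exact S.wallQ hA n (by omega) (by omega)
    · push_cast at h2 hE
      exact ih (by omega) j (by omega) (by linarith)

def Short (L : ℤ) (y : X) (c : ℤ) : Prop :=
  ∃ A B, A ≤ c ∧ c ≤ B ∧ B ≤ A + L ∧ S.Wall y A ∧ S.Wall y B

theorem near_left {Y : Set X} {R : ℤ} (hY : S.GoodY Y R) (N : ℕ) (H : ℤ) (hH : 0 ≤ H)
    (hcl : ∀ y ∈ Y, ∀ A E : ℤ, S.Wall y A → (N : ℤ) ≤ E →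
      (∀ k, A + R < k → k ≤ A + R + E → S.Q y k) →
      ∀ k, A ≤ k → k ≤ A + R + E - S.r * N → S.Q (S.f^[N] y) k)
    (y : X) (hy : y ∈ Y) (c A' : ℤ) (hA1 : c - H ≤ A') (hA2 : A' ≤ c) (hA3 : S.Wall y A') :
    S.Short (2 * R + (N + H + S.r * N)) y c ∨ S.Q (S.f^[N] y) c := by
  have hr := S.hr
  have hR := hY.hR
  have hrN : 0 ≤ S.r * N := by positivity
  obtain ⟨A, ⟨hA4, hA5⟩, hA6⟩ := exists_max_int (fun k => k ≤ c ∧ S.Wall y k) c (fun k hk => hk.1)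
    ⟨A', hA2, hA3⟩
  have hA7 := hA6 A' ⟨hA2, hA3⟩
  by_cases hB : ∃ B, c ≤ B ∧ B ≤ A + (2 * R + (N + H + S.r * N)) ∧ S.Wall y B
  · obtain ⟨B, h1, h2, h3⟩ := hB
    exact Or.inl ⟨A, B, hA4, h1, h2, hA5, h3⟩
  · right
    refine hcl y hy A (N + H + S.r * N) hA5 (by linarith) (fun k h1 h2 => ?_) c hA4 (by linarith)
    by_contra hk
    obtain ⟨a, h3, h4, h5⟩ := hY.wallAt hy hk
    by_cases h6 : a ≤ c
    · have := hA6 a ⟨h6, h5⟩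
      omega
    · exact hB ⟨a, by omega, by linarith, h5⟩

theorem Y_dies [CompactSpace X] {Y : Set X} {R : ℤ} (hY : S.GoodY Y R) (hG : ¬ S.Glider) :
    ∃ M : ℕ, ∀ y ∈ Y, S.f^[M] y = S.x₀ := by
  have hr := S.hr
  have hR := hY.hR
  obtain ⟨N1, hN1⟩ := S.right_clean hY hG
  obtain ⟨N2, hN2⟩ := S.mirror.right_clean hY.mirror (fun h => hG (S.mirror_Glider h))
  set N := max N1 N2 with hN
  replace hN1 := hN1 N (le_max_left _ _)
  replace hN2 := hN2 N (le_max_right _ _)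
  set H : ℤ := R + S.r * N with hH
  have hH0 : 0 ≤ H := by positivity
  set L : ℤ := 2 * R + (N + H + S.r * N) with hL
  have hL0 : 0 ≤ L := by positivity
  have alt : ∀ y ∈ Y, ∀ c, S.Short L y c ∨ S.Q (S.f^[N] y) c := by
    intro y hy c
    by_cases h1 : ∃ A, c - H ≤ A ∧ A ≤ c ∧ S.Wall y A
    · obtain ⟨A, h2, h3, h4⟩ := h1
      exact S.near_left hY N H hH0 hN1 y hy c A h2 h3 h4
    · by_cases h2 : ∃ A, c ≤ A ∧ A ≤ c + H ∧ S.Wall y A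
      · obtain ⟨A, h2, h3, h4⟩ := h2
        rcases S.mirror.near_left hY.mirror N H hH0 hN2 y hy (-c) (-A) (by omega) (by omega)
          (by rw [mirror_Wall]; simpa using h4) with h | h
        · left
          obtain ⟨A, B, h5, h6, h7, h8, h9⟩ := h
          rw [mirror_Wall] at h8 h9
          change B ≤ A + L at h7
          exact ⟨-B, -A, by omega, by omega, by omega, h9, h8⟩
        · right
          change S.Q (S.f^[N] y) (- -c) at h
          simpa using h
      · right
        refine S.spread_iter (a := c - S.r * N) (b := c + S.r * N) (fun k h3 h4 => ?_) N c
          (by linarith) (by linarith)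
        by_contra hk
        obtain ⟨a, h5, h6, h7⟩ := hY.wallAt hy hk
        by_cases h8 : a ≤ c
        · exact h1 ⟨a, by linarith, h8, h7⟩
        · exact h2 ⟨a, by omega, by linarith, h7⟩
  obtain ⟨T, hT⟩ := S.trapped L.toNat
  refine ⟨max N T, fun y hy => S.eq_of_Q fun c => ?_⟩
  have stay : ∀ M, N ≤ M → ∀ c, ¬ S.Short L y c → S.Q (S.f^[M] y) c := by
    intro M hM
    induction M, hM using Nat.le_induction with
    | base => exact fun c hc => (alt y hy c).resolve_left hc
    | succ n _ ih =>
      intro c hc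
      rw [Function.iterate_succ_apply']
      refine S.spreadQ fun j h1 h2 => ?_
      by_cases hj : S.Short L y j
      · obtain ⟨A, B, h3, h4, h5, h6, h7⟩ := hj
        by_cases h8 : c < A
        · exact S.wallQ h6 n (by omega) (by omega)
        · by_cases h9 : B < c
          · exact S.wallQ h7 n (by omega) (by omega)
          · exact absurd ⟨A, B, by omega, by omega, h5, h6, h7⟩ hc
      · exact ih j hj
  by_cases hc : S.Short L y c
  · obtain ⟨A, B, h3, h4, h5, h6, h7⟩ := hc
    exact hT y A B h6 h7 (by rw [Int.toNat_of_nonneg hL0]; exact h5) _ (le_max_right _ _) c h3 h4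
  · exact stay _ (le_max_left _ _) c hc

end NSys

namespace NSys

variable {X : Type} [MetricSpace X] (S : NSys X)

structure GoodM (M : Set (ℕ → X)) : Prop where
  cl : IsClosed M
  hist : ∀ h ∈ M, ∀ i, S.f (h (i + 1)) = h i
  act : ∀ k, ∀ h ∈ M, (fun i => S.s k (h i)) ∈ M
  drop : ∀ h ∈ M, (fun i => h (i + 1)) ∈ M
  alive : ∃ h ∈ M, S.Δ ≤ dist (h 0) S.x₀

theorem isClosed_aliveH : IsClosed {h : ℕ → X | S.Δ ≤ dist (h 0) S.x₀} :=
  isClosed_le continuous_const ((continuous_apply 0).dist continuous_const)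

theorem exists_alive {y : X} (hy : y ≠ S.x₀) : ∃ k, S.Δ ≤ dist (S.s k y) S.x₀ := by
  by_contra! h
  exact hy (S.eq_of_Q h)

theorem exists_hist [CompactSpace X] (hnn : ∀ n : ℕ, ∃ x, S.f^[n] x ≠ S.x₀) :
    S.GoodM {h : ℕ → X | ∀ i, S.f (h (i + 1)) = h i} where
  cl := by
    simp only [Set.ofPred_forall]
    exact isClosed_iInter fun i => isClosed_eq (S.hf.comp (continuous_apply _)) (continuous_apply _)
  hist h hh := hh
  act k h hh i := by
    change S.f (S.s k (h (i + 1))) = S.s k (h i)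
    rw [S.feq, hh]
  drop h hh i := hh (i + 1)
  alive := by
    obtain ⟨h, hh⟩ := nested_nonempty
      (fun n : ℕ => {h : ℕ → X | ∀ i < n, S.f (h (i + 1)) = h i} ∩ {h | S.Δ ≤ dist (h 0) S.x₀})
      (fun n h hh => ⟨fun i hi => hh.1 i (by omega), hh.2⟩)
      (fun n => by
        refine IsClosed.inter ?_ S.isClosed_aliveH
        simp only [Set.ofPred_forall]
        exact isClosed_iInter fun i => isClosed_iInter fun _ =>
          isClosed_eq (S.hf.comp (continuous_apply _)) (continuous_apply _))
      (fun n => by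
        obtain ⟨x, hx⟩ := hnn n
        obtain ⟨k, hk⟩ := S.exists_alive hx
        refine ⟨fun i => S.f^[n - i] (S.s k x), fun i hi => ?_, ?_⟩
        · change S.f (S.f^[n - (i + 1)] _) = S.f^[n - i] _
          rw [← Function.iterate_succ_apply' S.f]
          congr 1
          omega
        · change _ ≤ dist (S.f^[n] _) _
          rw [S.iter_eq]
          exact hk)
    exact ⟨h, fun i => (hh (i + 1)).1 i (by omega), (hh 0).2⟩

theorem exists_minimal [CompactSpace X] (hnn : ∀ n : ℕ, ∃ x, S.f^[n] x ≠ S.x₀) :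
    ∃ M, Minimal (fun M => S.GoodM M) M := by
  refine zorn_superset {M | S.GoodM M} fun c hc hchain => ?_
  rcases c.eq_empty_or_nonempty with rfl | hne
  · exact ⟨_, S.exists_hist hnn, by simp⟩
  · refine ⟨⋂₀ c, ?_, fun s hs => Set.sInter_subset_of_mem hs⟩
    refine ⟨isClosed_sInter fun t ht => (hc ht).cl, ?_, ?_, ?_, ?_⟩
    · obtain ⟨t, ht⟩ := hne
      exact fun h hh => (hc ht).hist h (hh t ht)
    · exact fun k h hh t ht => (hc ht).act k h (hh t ht)
    · exact fun h hh t ht => (hc ht).drop h (hh t ht)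
    · have : Nonempty c := hne.to_subtype
      have := IsCompact.nonempty_iInter_of_directed_nonempty_isCompact_isClosed
        (fun t : c => (t : Set (ℕ → X)) ∩ {h | S.Δ ≤ dist (h 0) S.x₀})
        (by
          intro a b
          rcases hchain.total a.2 b.2 with h | h
          · exact ⟨a, le_rfl, Set.inter_subset_inter_left _ h⟩
          · exact ⟨b, Set.inter_subset_inter_left _ h, le_rfl⟩)
        (fun t => (hc t.2).alive)
        (fun t => ((hc t.2).cl.inter S.isClosed_aliveH).isCompact)
        (fun t => (hc t.2).cl.inter S.isClosed_aliveH)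
      obtain ⟨h, hh⟩ := this
      rw [Set.mem_iInter] at hh
      exact ⟨h, fun t ht => (hh ⟨t, ht⟩).1, (hh ⟨_, hne.choose_spec⟩).2⟩

theorem hist_iter {h : ℕ → X} (hh : ∀ i, S.f (h (i + 1)) = h i) (t : ℕ) : S.f^[t] (h t) = h 0 := by
  induction t with
  | zero => rfl
  | succ t ih => rw [Function.iterate_succ_apply, hh, ih]

theorem ne_of_alive {y : X} (hy : S.Δ ≤ dist y S.x₀) : y ≠ S.x₀ := by
  rintro rfl
  rw [dist_self] at hy
  have := S.hΔ
  linarith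

theorem exists_Y [CompactSpace X] (hnn : ∀ n : ℕ, ∃ x, S.f^[n] x ≠ S.x₀) :
    ∃ Y R, S.GoodY Y R ∧ (∀ y ∈ Y, ∃ y' ∈ Y, S.f y' = y) ∧ ∃ y ∈ Y, y ≠ S.x₀ := by
  obtain ⟨M, hM, hmin⟩ := S.exists_minimal hnn
  have hdropn : ∀ h ∈ M, ∀ t, (fun i => h (i + t)) ∈ M := by
    intro h hh t
    induction t with
    | zero => exact hh
    | succ t ih =>
      have := hM.drop _ ih
      simpa only [add_assoc, add_comm 1 t] using this
  have htail : ∀ h ∈ M, S.Δ ≤ dist (h 0) S.x₀ → ∀ n, ∃ k, S.Δ ≤ dist (S.s k (h n)) S.x₀ := by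
    intro h hh hal n
    apply S.exists_alive
    intro h0
    have h1 := S.hist_iter (hM.hist h hh) n
    rw [h0, S.iter_fix] at h1
    exact S.ne_of_alive hal h1.symm
  have hcact : ∀ k, Continuous (fun (h : ℕ → X) i => S.s k (h i)) := fun k =>
    continuous_pi fun i => (S.s_cont k).comp (continuous_apply i)
  have hcdrop : ∀ t, Continuous (fun (h : ℕ → X) (i : ℕ) => h (i + t)) := fun t =>
    continuous_pi fun i => continuous_apply (i + t)
  -- orbit density
  have hdense : ∀ h ∈ M, S.Δ ≤ dist (h 0) S.x₀ → ∀ n : ℕ,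
      M ⊆ closure {g : ℕ → X | ∃ (k : ℤ) (t : ℕ), n ≤ t ∧ g = fun i => S.s k (h (i + t))} := by
    intro h hh hal n
    set O := {g : ℕ → X | ∃ (k : ℤ) (t : ℕ), n ≤ t ∧ g = fun i => S.s k (h (i + t))} with hO
    have hOM : closure O ⊆ M := by
      refine closure_minimal ?_ hM.cl
      rintro g ⟨k, t, _, rfl⟩
      exact hM.act k _ (hdropn h hh t)
    refine hmin ?_ hOM
    refine ⟨isClosed_closure, fun g hg => hM.hist g (hOM hg), fun k g hg => ?_, fun g hg => ?_, ?_⟩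
    · refine Set.MapsTo.closure (f := fun (h : ℕ → X) i => S.s k (h i)) ?_ (hcact k) hg
      rintro g ⟨k', t, ht, rfl⟩
      exact ⟨k + k', t, ht, funext fun i => (S.s_add _ _ _).symm⟩
    · refine Set.MapsTo.closure (f := fun (h : ℕ → X) (i : ℕ) => h (i + 1)) ?_ (hcdrop 1) hg
      rintro g ⟨k', t, ht, rfl⟩
      refine ⟨k', t + 1, by omega, funext fun i => ?_⟩
      change S.s k' (h (i + 1 + t)) = _
      rw [add_assoc, add_comm 1 t]
    · obtain ⟨k, hk⟩ := htail h hh hal n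
      exact ⟨_, subset_closure ⟨k, n, le_rfl, rfl⟩, by simpa using hk⟩
  have hMdrop : M ⊆ (fun (h : ℕ → X) (i : ℕ) => h (i + 1)) '' M := by
    refine hmin ?_ (by rintro _ ⟨h, hh, rfl⟩; exact hM.drop h hh)
    refine ⟨(hM.cl.isCompact.image (hcdrop 1)).isClosed, ?_, ?_, ?_, ?_⟩
    · rintro _ ⟨h, hh, rfl⟩ i
      exact hM.hist h hh (i + 1)
    · rintro k _ ⟨h, hh, rfl⟩
      exact ⟨_, hM.act k h hh, rfl⟩
    · rintro _ ⟨h, hh, rfl⟩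
      exact ⟨_, hM.drop h hh, rfl⟩
    · obtain ⟨h, hh, hal⟩ := hM.alive
      obtain ⟨k, hk⟩ := htail h hh hal 1
      exact ⟨_, ⟨_, hM.act k h hh, rfl⟩, hk⟩
  -- Baire
  obtain ⟨n, V, hVo, hVne, hV⟩ : ∃ (n : ℕ) (V : Set (ℕ → X)), IsOpen V ∧ (V ∩ M).Nonempty ∧
      ∀ h ∈ V ∩ M, S.Wall (S.f^[n] (h 0)) 0 := by
    have : Nonempty M := ⟨⟨_, hM.alive.choose_spec.1⟩⟩
    have : CompactSpace M := isCompact_iff_compactSpace.1 hM.cl.isCompact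
    have hcl : ∀ n : ℕ, IsClosed {h : M | S.Wall (S.f^[n] (h.1 0)) 0} := by
      intro n
      exact (S.isClosed_wall 0).preimage
        ((S.iter_cont n).comp ((continuous_apply 0).comp continuous_subtype_val))
    have hun : (⋃ n : ℕ, {h : M | S.Wall (S.f^[n] (h.1 0)) 0}) = Set.univ := by
      refine Set.eq_univ_of_forall fun h => ?_
      rw [Set.mem_iUnion]
      have hev : ∀ k ∈ Set.Icc (0 - S.r) (0 + S.r), ∀ᶠ m in Filter.atTop,
          dist (S.s k (S.f^[m] (h.1 0))) S.x₀ ≤ S.Δ / 2 := by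
        intro k _
        have h1 := ((S.s_cont k).tendsto S.x₀).comp (S.hAN (h.1 0))
        rw [S.s_fix] at h1
        exact ((Metric.tendsto_nhds.1 h1) (S.Δ / 2) (half_pos S.hΔ)).mono fun m hm => hm.le
      have hev := (Filter.eventually_all_finite (Set.finite_Icc _ _)).2 hev
      obtain ⟨n, hn⟩ := Filter.eventually_atTop.1 hev
      refine ⟨n, fun m j h1 h2 => ?_⟩
      rw [← Function.iterate_add_apply]
      exact hn (m + n) (by omega) j ⟨h1, h2⟩
    obtain ⟨n, ⟨h, hh⟩⟩ := nonempty_interior_of_iUnion_of_closed hcl hun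
    obtain ⟨V, hVo, hVeq⟩ := isOpen_induced_iff.1
      (isOpen_interior (s := {h : M | S.Wall (S.f^[n] (h.1 0)) 0}))
    refine ⟨n, V, hVo, ⟨h.1, ?_, h.2⟩, ?_⟩
    · rw [← hVeq] at hh
      exact hh
    · rintro g ⟨hg1, hg2⟩
      have : (⟨g, hg2⟩ : M) ∈ interior {h : M | S.Wall (S.f^[n] (h.1 0)) 0} := by
        rw [← hVeq]
        exact hg1
      exact interior_subset this
  -- compactness
  have hcov : M ∩ {h | S.Δ ≤ dist (h 0) S.x₀} ⊆
      ⋃ p : ℤ × ℕ, {h | n ≤ p.2 ∧ (fun i => S.s p.1 (h (i + p.2))) ∈ V} := by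
    rintro h ⟨hh, hal⟩
    obtain ⟨g, hg1, hg2⟩ := hVne
    obtain ⟨g', hg'1, k, t, ht, rfl⟩ := mem_closure_iff.1 (hdense h hh hal n hg2) V hVo hg1
    exact Set.mem_iUnion.2 ⟨(k, t), ht, hg'1⟩
  obtain ⟨F, hF⟩ := (hM.cl.inter S.isClosed_aliveH).isCompact.elim_finite_subcover _
    (fun p : ℤ × ℕ => by
      by_cases hp : n ≤ p.2
      · simp only [hp, true_and]
        exact hVo.preimage ((hcact p.1).comp (hcdrop p.2))
      · simp [hp]) hcov
  refine ⟨(fun h : ℕ → X => h 0) '' M, (F.sup fun p => p.1.natAbs : ℕ), ⟨by positivity,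
    (hM.cl.isCompact.image (continuous_apply 0)).isClosed, ?_, ?_, ?_⟩, ?_, ?_⟩
  · rintro _ ⟨h, hh, rfl⟩
    obtain ⟨h', hh', rfl⟩ := hMdrop hh
    exact ⟨h', hh', (hM.hist h' hh' 0).symm⟩
  · rintro k _ ⟨h, hh, rfl⟩
    exact ⟨_, hM.act k h hh, rfl⟩
  · rintro _ ⟨h, hh, rfl⟩ hal
    have hal' : S.Δ ≤ dist (h 0) S.x₀ := by
      unfold Q at hal
      rw [S.s_zero] at hal
      exact not_lt.1 hal
    obtain ⟨p, hp⟩ := Set.mem_iUnion.1 (hF ⟨hh, hal'⟩)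
    obtain ⟨hpF, hp1, hp2⟩ := Set.mem_iUnion.1 hp
    have hle := Finset.le_sup (f := fun p : ℤ × ℕ => p.1.natAbs) hpF
    refine ⟨p.1, by omega, by omega, ?_⟩
    have hw := hV _ ⟨hp2, hM.act p.1 _ (hdropn h hh p.2)⟩
    have hw2 := S.wall_iter hw (p.2 - n)
    rw [← Function.iterate_add_apply, Nat.sub_add_cancel hp1, S.iter_eq, zero_add,
      S.hist_iter (hM.hist h hh), S.wall_shift, zero_add] at hw2
    exact hw2
  · rintro _ ⟨h, hh, rfl⟩
    exact ⟨_, ⟨_, hM.drop h hh, rfl⟩, hM.hist h hh 0⟩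
  · obtain ⟨h, hh, hal⟩ := hM.alive
    exact ⟨_, ⟨h, hh, rfl⟩, S.ne_of_alive hal⟩

theorem glider_of_not_nilpotent [CompactSpace X] (hnn : ∀ n : ℕ, ∃ x, S.f^[n] x ≠ S.x₀) :
    S.Glider := by
  by_contra hG
  obtain ⟨Y, R, hY, hsur, y, hy, hne⟩ := S.exists_Y hnn
  obtain ⟨M, hM⟩ := S.Y_dies hY hG
  have : ∀ m : ℕ, ∀ y ∈ Y, ∃ y' ∈ Y, S.f^[m] y' = y := by
    intro m
    induction m with
    | zero => exact fun y hy => ⟨y, hy, rfl⟩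
    | succ m ih =>
      intro y hy
      obtain ⟨y1, h1, rfl⟩ := hsur y hy
      obtain ⟨y2, h2, rfl⟩ := ih y1 h1
      exact ⟨y2, h2, Function.iterate_succ_apply' _ _ _⟩
  obtain ⟨w, h1, rfl⟩ := this M y hy
  exact hne (hM w h1)

/-- A point glued from copies of a glider moves with it, so it tends to the fixed point in
the direction of motion; this prevents recurrence to the glider. -/
theorem no_recurrence [CompactSpace X] (z : X) (n : ℕ) (k : ℤ) (hn : 0 < n) (hk : 0 ≤ k)
    (hz : z ≠ S.x₀) (hgl : S.f^[n] z = S.s k z) :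
    ∃ ε : ℝ, 0 < ε ∧ ∀ x1 : X, (∀ m : ℤ, ∃ j : ℤ, dist (S.s m x1) (S.s j z) < ε) →
      ¬ {m : ℤ | 0 < m ∧ dist (S.s m x1) z < ε}.Infinite := by
  have hΔ := S.hΔ
  obtain ⟨ε1, h1, h1'⟩ := Metric.uniformContinuous_iff.1
    (CompactSpace.uniformContinuous_of_continuous (S.iter_cont n)) (S.Δ / 2) (by linarith)
  obtain ⟨ε2, h2, h2'⟩ := Metric.uniformContinuous_iff.1
    (CompactSpace.uniformContinuous_of_continuous (S.s_cont k)) (S.Δ / 2) (by linarith)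
  have hd : 0 < dist z S.x₀ := dist_pos.2 hz
  refine ⟨min (min ε1 ε2) (dist z S.x₀ / 2), by positivity, fun x1 hx1 hinf => ?_⟩
  have hx : S.f^[n] x1 = S.s k x1 := by
    apply S.hexp
    intro m
    obtain ⟨j, hj⟩ := hx1 m
    have e1 := h1' (hj.trans_le ((min_le_left _ _).trans (min_le_left _ _)))
    have e2 := h2' (hj.trans_le ((min_le_left _ _).trans (min_le_right _ _)))
    rw [S.iter_eq, S.iter_eq, hgl, ← S.s_add j k, add_comm j k, S.s_add] at e1
    rw [← S.s_add k m, add_comm k m, S.s_add] at e2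
    have := dist_triangle_right (S.s m (S.f^[n] x1)) (S.s m (S.s k x1)) (S.s k (S.s j z))
    linarith
  have hiter : ∀ (x : X), S.f^[n] x = S.s k x → ∀ m : ℕ, S.f^[n * m] x = S.s (k * m) x := by
    intro x hx m
    induction m with
    | zero => simp [S.s_zero]
    | succ m ih =>
      rw [Nat.mul_succ, Function.iterate_add_apply, hx, S.iter_eq, ih, ← S.s_add]
      congr 1
      push_cast
      ring
  have htend : ∀ x : X, Filter.Tendsto (fun m : ℕ => S.f^[n * m] x) Filter.atTop (nhds S.x₀) :=
    fun x => (S.hAN x).comp (Filter.tendsto_id.const_mul_atTop' hn)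
  rcases hk.eq_or_lt with rfl | hk
  · have := htend z
    simp only [hiter z hgl, zero_mul, S.s_zero] at this
    exact hz (tendsto_nhds_unique tendsto_const_nhds this)
  · have hev : ∀ i ∈ Set.Ico 0 k, ∀ᶠ m : ℕ in Filter.atTop,
        dist (S.s i (S.s (k * m) x1)) S.x₀ < dist z S.x₀ / 2 := by
      intro i _
      have h3 := ((S.s_cont i).tendsto S.x₀).comp (htend x1)
      rw [S.s_fix] at h3
      refine ((Metric.tendsto_nhds.1 h3) _ (half_pos hd)).mono fun m hm => ?_
      rw [← hiter x1 hx]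
      exact hm
    obtain ⟨m0, hm0⟩ := Filter.eventually_atTop.1
      ((Filter.eventually_all_finite (Set.finite_Ico 0 k)).2 hev)
    apply hinf
    refine (Set.finite_Icc 0 (k * m0)).subset ?_
    rintro m ⟨hm1, hm2⟩
    refine ⟨hm1.le, ?_⟩
    by_contra hlt
    push Not at hlt
    have hdiv : (m0 : ℤ) ≤ m / k := by
      rw [Int.le_ediv_iff_mul_le hk]; linarith
    have h4 := hm0 (m / k).toNat (by omega) (m % k) ⟨Int.emod_nonneg _ hk.ne', Int.emod_lt_of_pos _ hk⟩
    rw [← S.s_add, Int.toNat_of_nonneg (by omega), Int.emod_add_mul_ediv] at h4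
    have h5 := hm2.trans_le (min_le_right _ _)
    have := dist_triangle_left z S.x₀ (S.s m x1)
    linarith

end NSys

/-- Let `(ℤ, X, 0)` be an expansive pointed `ℤ`-dynamical system such
that for each homoclinic point `x` and every `ε > 0` there are points `x¹, x²` whose
orbits `ε`-shadow translates of `x` at every time, with `k = 0` admissible for
infinitely many positive times for `x¹` and infinitely many negative times for `x²`.
Then every asymptotically nilpotent endomorphism of the system is nilpotent. -/
theorem statement14 {X : Type} [MetricSpace X] [CompactSpace X] [AddAction ℤ X]
    (hcont : ∀ n : ℤ, Continuous fun x : X => n +ᵥ x)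
    (x₀ : X) (hx₀ : ∀ n : ℤ, n +ᵥ x₀ = x₀)
    (hexp : ∃ Δ : ℝ, 0 < Δ ∧
      ∀ x y : X, (∀ n : ℤ, dist (n +ᵥ x) (n +ᵥ y) ≤ Δ) → x = y)
    (hrec : ∀ x : X,
      (∀ ε : ℝ, 0 < ε → ∃ E : Finset ℤ, ∀ n : ℤ, n ∉ E → dist (n +ᵥ x) x₀ < ε) →
      ∀ ε : ℝ, 0 < ε → ∃ x1 x2 : X,
        (∀ n : ℤ, ∃ k : ℤ, dist (n +ᵥ x1) (k +ᵥ x) < ε) ∧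
        (∀ n : ℤ, ∃ k : ℤ, dist (n +ᵥ x2) (k +ᵥ x) < ε) ∧
        {n : ℤ | 0 < n ∧ dist (n +ᵥ x1) x < ε}.Infinite ∧
        {n : ℤ | n < 0 ∧ dist (n +ᵥ x2) x < ε}.Infinite)
    (f : X → X) (hf : Continuous f) (hf₀ : f x₀ = x₀)
    (hfeq : ∀ (n : ℤ) (x : X), f (n +ᵥ x) = n +ᵥ f x)
    (hAN : ∀ x : X, Filter.Tendsto (fun n => f^[n] x) Filter.atTop (nhds x₀)) :
    ∃ n : ℕ, ∀ x : X, f^[n] x = x₀ := by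
  classical
  obtain ⟨Δ, hΔ, hexp⟩ := hexp
  by_contra! hnn
  obtain ⟨δ, hδ, hδ'⟩ := Metric.continuousAt_iff.1 hf.continuousAt (Δ / 2) (by linarith)
  rw [hf₀] at hδ'
  have huni := unif_exp (fun n x => n +ᵥ x) x₀ Δ hcont hx₀ hexp
  obtain ⟨r, hr⟩ := huni (min δ (Δ / 2)) (by positivity)
  let S : NSys X :=
    { s := fun n x => n +ᵥ x
      x₀ := x₀
      f := f
      Δ := Δ
      r := r
      s_cont := hcont
      s_zero := fun x => zero_vadd ℤ x
      s_add := fun m n x => add_vadd m n x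
      s_fix := hx₀
      hΔ := hΔ
      hexp := hexp
      hf := hf
      f0 := hf₀
      feq := hfeq
      hAN := hAN
      hr := by positivity
      hE := fun y hy => by
        have := hr y hy
        exact ⟨(this.trans_le (min_le_right _ _)).le, (hδ' (this.trans_le (min_le_left _ _))).le⟩ }
  obtain ⟨z, n, k, hz, hn, hgl, a, b, hab⟩ := S.glider_of_not_nilpotent hnn
  have hhom : ∀ ε : ℝ, 0 < ε → ∃ E : Finset ℤ, ∀ n : ℤ, n ∉ E → dist (n +ᵥ z) x₀ < ε := by
    intro ε hε
    obtain ⟨N, hN⟩ := huni ε hε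
    refine ⟨Finset.Icc (a - N) (b + N), fun n hn => hN _ fun j h1 h2 => ?_⟩
    rw [Finset.mem_Icc] at hn
    have := hab (j + n) (by omega)
    change dist (j +ᵥ (n +ᵥ z)) x₀ ≤ Δ
    rw [← add_vadd]
    exact this
  rcases le_total 0 k with hk | hk
  · obtain ⟨ε, hε, hno⟩ := S.no_recurrence z n k hn hk hz hgl
    obtain ⟨x1, x2, h1, h2, h3, h4⟩ := hrec z hhom ε hε
    exact hno x1 h1 h3
  · obtain ⟨ε, hε, hno⟩ := S.mirror.no_recurrence z n (-k) hn (by omega) hz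
      (by change f^[n] z = (- -k) +ᵥ z; rw [neg_neg]; exact hgl)
    obtain ⟨x1, x2, h1, h2, h3, h4⟩ := hrec z hhom ε hε
    refine hno x2 (fun m => ?_) ?_
    · obtain ⟨j, hj⟩ := h2 (-m)
      refine ⟨-j, ?_⟩
      change dist (-m +ᵥ x2) (- -j +ᵥ z) < ε
      rw [neg_neg]
      exact hj
    · refine (h4.image (f := fun m : ℤ => -m) neg_injective.injOn).mono ?_
      rintro _ ⟨m, ⟨hm1, hm2⟩, rfl⟩
      refine ⟨by simpa using hm1, ?_⟩
      change dist (- -m +ᵥ x2) z < ε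
      rw [neg_neg]
      exact hm2
end
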